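/- arXiv:1510.05081 — 2 statements merged into one kernel-verified Lean document; each statement's English description precedes it below -/
import Mathlib

section
/- Let Ω ⊂ ℝ² be a bounded Lipschitz open set and u ∈ BV(Ω). Then there exists a sequence (u_n) ⊂ C¹(Ω) ∩ W^{1,1}(Ω) such that u_n → u in L¹(Ω), ∫_Ω |∇u_n| → ∫_Ω |Du|, tr_{∂Ω} u_n = tr_{∂Ω} u for all n, and moreover for k ∈ {1,2}, ∫_Ω |∂_k u_n| → ∫_Ω |D_k u|. -/
noncomputable section
open MeasureTheory Filter Set Topology Metric

/-- The Euclidean plane. -/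
abbrev E2 : Type := EuclideanSpace ℝ (Fin 2)

/-- Divergence of a vector field on the plane. -/
def divg (ξ : E2 → E2) (x : E2) : ℝ :=
  ∑ i : Fin 2, fderiv ℝ ξ x (EuclideanSpace.single i 1) i

/-- Test values for the total variation of `u` on `Ω`: numbers `∫_Ω u div ξ` for
vector fields `ξ ∈ C¹_c(Ω, ℝ²)` with `|ξ| ≤ 1`. -/
def varSet (Ω : Set E2) (u : E2 → ℝ) : Set ℝ :=
  {v | ∃ ξ : E2 → E2, ContDiff ℝ 1 ξ ∧ HasCompactSupport ξ ∧ tsupport ξ ⊆ Ω ∧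
      (∀ x, ‖ξ x‖ ≤ 1) ∧ v = ∫ x in Ω, u x * divg ξ x}

/-- The total variation `∫_Ω |Du|`. -/
def totalVar (Ω : Set E2) (u : E2 → ℝ) : ℝ := sSup (varSet Ω u)

/-- `u` is of bounded variation on `Ω`. -/
def IsBVOn (Ω : Set E2) (u : E2 → ℝ) : Prop :=
  IntegrableOn u Ω volume ∧ BddAbove (varSet Ω u)

/-- `u` has trace `h` on the part of `∂Ω` carried by the boundary measure `μb`:
for `μb`-a.e. boundary point `x`, the averages of `|u - h x|` over `B(x,r) ∩ Ω`
tend to `0` as `r → 0⁺`. -/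
def HasTraceOn (Ω : Set E2) (μb : Measure E2) (u h : E2 → ℝ) : Prop :=
  ∀ᵐ x ∂μb, Tendsto (fun r : ℝ => ⨍ y in ball x r ∩ Ω, |u y - h x|)
    (𝓝[>] (0:ℝ)) (𝓝 0)

/-- Test values for the variation of `u` in the `k`-th coordinate direction. -/
def dirVarSet (Ω : Set E2) (u : E2 → ℝ) (k : Fin 2) : Set ℝ :=
  {v | ∃ ξ : E2 → ℝ, ContDiff ℝ 1 ξ ∧ HasCompactSupport ξ ∧ tsupport ξ ⊆ Ω ∧
      (∀ x, |ξ x| ≤ 1) ∧ v = ∫ x in Ω, u x * fderiv ℝ ξ x (EuclideanSpace.single k 1)}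

/-- The directional variation `∫_Ω |D_k u|`. -/
def dirVar (Ω : Set E2) (u : E2 → ℝ) (k : Fin 2) : ℝ := sSup (dirVarSet Ω u k)

/-- `s ⊆ ℝ²` is a Lipschitz open set: near each boundary point, `s` is the open
subgraph of a Lipschitz function in suitable rotated coordinates. -/
def IsLipschitzSet (s : Set E2) : Prop :=
  ∀ x ∈ frontier s, ∃ (e : E2 ≃ₗᵢ[ℝ] E2) (f : ℝ → ℝ) (L : NNReal) (ε : ℝ),
    0 < ε ∧ LipschitzWith L f ∧
    ∀ y ∈ ball x ε, (y ∈ s ↔ (e (y - x)) 1 < f ((e (y - x)) 0))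

/-!
Take a smooth partition of unity `ζⱼ` of `Ω` subordinate to dyadic shells and glue mollifications
of the pieces, `v = ∑ⱼ ηⱼ * (ζⱼ u)`, with kernels `ηⱼ` so narrow that the `j`-th errors are at most
`δⱼ`. Since `∑ⱼ D ζⱼ = 0`, testing `v` against a field `ξ` amounts to testing `u` against the
admissible field `∑ⱼ ζⱼ (ηⱼ * ξ)`, up to the small error `∑ⱼ ∫ (u Dζⱼ - ηⱼ * (u Dζⱼ)) · ξ`. Hence
every variation of `v` exceeds that of `u` by at most `O(∑ⱼ δⱼ)`, and lower semicontinuity gives the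
convergence of all of them at once: the total and the directional variations only differ in the
operator `ξ ↦ L (Dξ)` of the test fields.

For the trace, `δⱼ` also has to be small against the volume of a ball of radius comparable to
`2⁻ʲ`. If the `j`-th piece is not zero on `B(x, r) ∩ Ω`, where `x ∉ Ω`, then `B(x, r) ∩ Ω` contains
such a ball, so the mean of `|v - u|` over `B(x, r) ∩ Ω` is `O(r)`, whatever the shape of `Ω`.
-/

open scoped ContDiff

section Mollification

variable {E V W G ι : Type*} [NormedAddCommGroup E] [NormedSpace ℝ E] [FiniteDimensional ℝ E]
  [MeasurableSpace E] [NormedAddCommGroup V] [NormedSpace ℝ V] [NormedAddCommGroup W]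
  [NormedSpace ℝ W] [NormedAddCommGroup G] [NormedSpace ℝ G]

/-- The mollification of `g`: its convolution with the bump function `φ`, normalized so as to have
`μ`-integral one. -/
def mollify (μ : Measure E) (φ : ContDiffBump (0 : E)) (g : E → V) : E → V :=
  convolution (φ.normed μ) g (ContinuousLinearMap.lsmul ℝ ℝ) μ

variable [BorelSpace E] {μ : Measure E} [μ.IsAddHaarMeasure]

theorem mollify_apply (φ : ContDiffBump (0 : E)) (g : E → V) (x : E) :
    mollify μ φ g x = ∫ y, φ.normed μ (x - y) • g y ∂μ :=
  convolution_lsmul_swap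

theorem integrable_mollify (φ : ContDiffBump (0 : E)) {g : E → V} (hg : Integrable g μ) :
    Integrable (mollify μ φ g) μ :=
  φ.integrable_normed.integrable_convolution _ hg

theorem contDiff_mollify (φ : ContDiffBump (0 : E)) {g : E → V} (hg : LocallyIntegrable g μ) :
    ContDiff ℝ ∞ (mollify μ φ g) :=
  φ.hasCompactSupport_normed.contDiff_convolution_left _ φ.contDiff_normed hg

theorem exists_ne_zero_of_mollify_ne_zero {φ : ContDiffBump (0 : E)} {g : E → V} {x : E}
    (h : mollify μ φ g x ≠ 0) : ∃ y, dist x y < φ.rOut ∧ g y ≠ 0 := by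
  contrapose! h
  rw [mollify_apply]
  refine integral_eq_zero_of_ae (Eventually.of_forall fun y => ?_)
  by_cases hy : dist x y < φ.rOut
  · simp [h y hy]
  · have : x - y ∉ Function.support (φ.normed μ) := by
      rw [φ.support_normed_eq]
      simpa [dist_eq_norm] using hy
    simp [Function.notMem_support.1 this]

theorem integrable_normed_sub_smul (φ : ContDiffBump (0 : E)) {g : E → V}
    (hg : LocallyIntegrable g μ) (x : E) : Integrable (fun y => φ.normed μ (x - y) • g y) μ :=
  (φ.hasCompactSupport_normed.convolutionExists_left (ContinuousLinearMap.lsmul ℝ ℝ)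
    φ.continuous_normed hg x).integrable_swap

theorem mollify_sub (φ : ContDiffBump (0 : E)) {g h : E → V} (hg : LocallyIntegrable g μ)
    (hh : LocallyIntegrable h μ) : mollify μ φ (g - h) = mollify μ φ g - mollify μ φ h := by
  ext x
  simp_rw [Pi.sub_apply, mollify_apply, Pi.sub_apply, smul_sub]
  exact integral_sub (integrable_normed_sub_smul φ hg x) (integrable_normed_sub_smul φ hh x)

theorem clm_apply_mollify [CompleteSpace V] [CompleteSpace W] (A : V →L[ℝ] W)
    (φ : ContDiffBump (0 : E)) {g : E → V} (hg : LocallyIntegrable g μ) (x : E) :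
    A (mollify μ φ g x) = mollify μ φ (fun y => A (g y)) x := by
  simp_rw [mollify_apply, ← A.integral_comp_comm (integrable_normed_sub_smul φ hg x), map_smul]

theorem fderiv_mollify (φ : ContDiffBump (0 : E)) {g : E → V} (hg : ContDiff ℝ 1 g)
    (hc : HasCompactSupport g) : fderiv ℝ (mollify μ φ g) = mollify μ φ (fderiv ℝ g) := by
  ext1 x
  exact (hc.hasFDerivAt_convolution_right _ φ.continuous_normed.locallyIntegrable hg x).fderiv

theorem norm_mollify_le (φ : ContDiffBump (0 : E)) {g : E → V} {C : ℝ} (hg : ∀ x, ‖g x‖ ≤ C)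
    (x : E) : ‖mollify μ φ g x‖ ≤ C := by
  have h : ‖mollify μ φ g x‖ ≤ ∫ y, φ.normed μ y * C ∂μ := by
    refine norm_integral_le_of_norm_le (φ.integrable_normed.mul_const C)
      (Eventually.of_forall fun y => ?_)
    simp only [ContinuousLinearMap.lsmul_apply, norm_smul, Real.norm_eq_abs,
      abs_of_nonneg (φ.nonneg_normed y)]
    exact mul_le_mul_of_nonneg_left (hg _) (φ.nonneg_normed y)
  rwa [integral_mul_const, φ.integral_normed, one_mul] at h

theorem integral_norm_mollify_le (φ : ContDiffBump (0 : E)) {g : E → V} (hg : Integrable g μ) :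
    ∫ x, ‖mollify μ φ g x‖ ∂μ ≤ ∫ x, ‖g x‖ ∂μ := by
  have hpointwise : ∀ x, ‖mollify μ φ g x‖ ≤ mollify μ φ (fun y => ‖g y‖) x := fun x => by
    simp_rw [mollify_apply]
    refine (norm_integral_le_integral_norm _).trans_eq (integral_congr_ae
      (Eventually.of_forall fun y => ?_))
    simp [norm_smul, abs_of_nonneg (φ.nonneg_normed (μ := μ) (x - y))]
  calc ∫ x, ‖mollify μ φ g x‖ ∂μ ≤ ∫ x, mollify μ φ (fun y => ‖g y‖) x ∂μ :=
        integral_mono (integrable_mollify φ hg).norm (integrable_mollify φ hg.norm) hpointwise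
    _ = ∫ x, ‖g x‖ ∂μ := by
        rw [mollify, integral_convolution _ φ.integrable_normed hg.norm, φ.integral_normed]
        simp

theorem integral_bilinear_mollify_left_eq_right [CompleteSpace V] [CompleteSpace W]
    [CompleteSpace G] (φ : ContDiffBump (0 : E)) (B : V →L[ℝ] W →L[ℝ] G) {g : E → V} {h : E → W}
    (hg : Integrable g μ) (hh : Integrable h μ) :
    ∫ x, B (mollify μ φ g x) (h x) ∂μ = ∫ x, B (g x) (mollify μ φ h x) ∂μ := by
  have hl : ∀ x, B (mollify μ φ g x) (h x) =
      ∫ y, φ.normed μ (x - y) • B (g y) (h x) ∂μ := fun x => by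
    rw [← B.flip_apply, clm_apply_mollify _ φ hg.locallyIntegrable, mollify_apply]
    rfl
  have hr : ∀ y, B (g y) (mollify μ φ h y) =
      ∫ x, φ.normed μ (x - y) • B (g y) (h x) ∂μ := fun y => by
    simp_rw [clm_apply_mollify _ φ hh.locallyIntegrable, mollify_apply,
      ← φ.normed_neg (μ := μ) (y - _), neg_sub]
  simp_rw [hl, hr]
  apply integral_integral_swap
  obtain ⟨C, hC⟩ := (φ.hasCompactSupport_normed (μ := μ)).exists_bound_of_continuous
    φ.continuous_normed
  refine Integrable.bdd_smul (C := C) (f := fun p : E × E => B (g p.2) (h p.1)) ?_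
    (φ.continuous_normed.comp (continuous_fst.sub continuous_snd)).aestronglyMeasurable
    (Eventually.of_forall fun p => hC _)
  refine ((hh.norm.mul_prod hg.norm).const_mul ‖B‖).mono' ?_ (Eventually.of_forall fun p => ?_)
  · exact B.continuous₂.comp_aestronglyMeasurable (hg.1.comp_snd.prodMk hh.1.comp_fst)
  · calc ‖B (g p.2) (h p.1)‖ ≤ ‖B‖ * ‖g p.2‖ * ‖h p.1‖ := B.le_opNorm₂ _ _
      _ = ‖B‖ * (‖h p.1‖ * ‖g p.2‖) := by ring

theorem tendsto_integral_norm_mollify_sub_of_hasCompactSupport [CompleteSpace V]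
    {l : Filter ι} {φ : ι → ContDiffBump (0 : E)} (hφ : Tendsto (fun i => (φ i).rOut) l (𝓝 0))
    {h : E → V} (hcont : Continuous h) (hc : HasCompactSupport h) :
    Tendsto (fun i => ∫ x, ‖mollify μ (φ i) h x - h x‖ ∂μ) l (𝓝 0) := by
  set K := cthickening 1 (tsupport h)
  have hK : IsCompact K := hc.isCompact.cthickening
  have hpos : 0 < μ.real K + 1 := by positivity
  have hzero : ∀ i, (φ i).rOut ≤ 1 → ∀ x ∉ K, ‖mollify μ (φ i) h x - h x‖ = 0 := by
    intro i hi x hx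
    have h1 : h x = 0 := image_eq_zero_of_notMem_tsupport fun hmem =>
      hx (self_subset_cthickening _ hmem)
    have h2 : mollify μ (φ i) h x = 0 := by
      contrapose! hx
      obtain ⟨y, hxy, hy⟩ := exists_ne_zero_of_mollify_ne_zero hx
      exact mem_cthickening_of_dist_le x y 1 _ (subset_tsupport _ hy) (hxy.le.trans hi)
    rw [h1, h2, sub_zero, norm_zero]
  refine tendsto_order.2 ⟨fun a ha => Eventually.of_forall fun i =>
    ha.trans_le (integral_nonneg fun x => norm_nonneg _), fun ε hε => ?_⟩
  obtain ⟨ρ, hρ, hunif⟩ := Metric.uniformContinuous_iff.1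
    (hc.uniformContinuous_of_continuous hcont) (ε / (μ.real K + 1)) (by positivity)
  filter_upwards [hφ.eventually_lt_const hρ, hφ.eventually_le_const one_pos] with i hi hi'
  have hclose : ∀ x, ‖mollify μ (φ i) h x - h x‖ ≤ ε / (μ.real K + 1) := fun x => by
    rw [← dist_eq_norm]
    exact (φ i).dist_normed_convolution_le hcont.aestronglyMeasurable fun y hy =>
      (hunif ((mem_ball.1 hy).trans hi)).le
  have hint : Integrable h μ := hcont.integrable_of_hasCompactSupport hc
  calc ∫ x, ‖mollify μ (φ i) h x - h x‖ ∂μ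
      = ∫ x in K, ‖mollify μ (φ i) h x - h x‖ ∂μ :=
        (setIntegral_eq_integral_of_forall_compl_eq_zero (hzero i hi')).symm
    _ ≤ ∫ x in K, ε / (μ.real K + 1) ∂μ :=
        setIntegral_mono ((integrable_mollify (φ i) hint).sub hint).norm.integrableOn
          (integrableOn_const hK.measure_ne_top) hclose
    _ = ε * (μ.real K / (μ.real K + 1)) := by simp; ring
    _ < ε := mul_lt_of_lt_one_right hε ((div_lt_one hpos).2 (lt_add_one _))

theorem tendsto_integral_norm_mollify_sub [CompleteSpace V] {l : Filter ι}
    {φ : ι → ContDiffBump (0 : E)} (hφ : Tendsto (fun i => (φ i).rOut) l (𝓝 0))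
    {g : E → V} (hg : Integrable g μ) :
    Tendsto (fun i => ∫ x, ‖mollify μ (φ i) g x - g x‖ ∂μ) l (𝓝 0) := by
  refine tendsto_order.2 ⟨fun a ha => Eventually.of_forall fun i =>
    ha.trans_le (integral_nonneg fun x => norm_nonneg _), fun ε hε => ?_⟩
  obtain ⟨h, hc, hgh, hcont, hint⟩ := hg.exists_hasCompactSupport_integral_sub_le
    (show 0 < ε / 3 by positivity)
  filter_upwards [(tendsto_integral_norm_mollify_sub_of_hasCompactSupport (μ := μ) hφ hcont
    hc).eventually_lt_const (show 0 < ε / 3 by positivity)] with i hi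
  have hd : Integrable (g - h) μ := hg.sub hint
  have hm : Integrable (fun x => mollify μ (φ i) h x - h x) μ :=
    (integrable_mollify _ hint).sub hint
  have hpointwise : ∀ x, ‖mollify μ (φ i) g x - g x‖ ≤
      ‖mollify μ (φ i) (g - h) x‖ + ‖mollify μ (φ i) h x - h x‖ + ‖(g - h) x‖ := fun x => by
    rw [mollify_sub _ hg.locallyIntegrable hint.locallyIntegrable, Pi.sub_apply, Pi.sub_apply]
    refine le_trans (le_of_eq ?_) ((norm_sub_le _ _).trans
      (add_le_add_left (norm_add_le _ _) _))
    congr 1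
    abel
  calc ∫ x, ‖mollify μ (φ i) g x - g x‖ ∂μ
      ≤ ∫ x, (‖mollify μ (φ i) (g - h) x‖ + ‖mollify μ (φ i) h x - h x‖ + ‖(g - h) x‖) ∂μ :=
        integral_mono ((integrable_mollify _ hg).sub hg).norm
          (((integrable_mollify _ hd).norm.add hm.norm).add hd.norm) hpointwise
    _ = (∫ x, ‖mollify μ (φ i) (g - h) x‖ ∂μ) + (∫ x, ‖mollify μ (φ i) h x - h x‖ ∂μ) +
          ∫ x, ‖(g - h) x‖ ∂μ := by
        rw [integral_add _ hd.norm, integral_add (integrable_mollify _ hd).norm hm.norm]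
        exact (integrable_mollify _ hd).norm.add hm.norm
    _ < ε / 3 + ε / 3 + ε / 3 := by
        have := integral_norm_mollify_le (φ i) hd
        have : ∫ x, ‖(g - h) x‖ ∂μ ≤ ε / 3 := hgh
        linarith
    _ = ε := by ring

theorem exists_mollify_sub_le [CompleteSpace V] [CompleteSpace W] {g : E → V}
    (hg : Integrable g μ) {h : E → W} (hh : Integrable h μ) {ρ δ : ℝ} (hρ : 0 < ρ) (hδ : 0 < δ) :
    ∃ φ : ContDiffBump (0 : E), φ.rOut ≤ ρ ∧ ∫ x, ‖mollify μ φ g x - g x‖ ∂μ ≤ δ ∧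
      ∫ x, ‖mollify μ φ h x - h x‖ ∂μ ≤ δ := by
  let φ (n : ℕ) : ContDiffBump (0 : E) :=
    ⟨1 / (n + 1) / 2, 1 / (n + 1), by positivity, half_lt_self (by positivity)⟩
  have hφ : Tendsto (fun n => (φ n).rOut) atTop (𝓝 0) := tendsto_one_div_add_atTop_nhds_zero_nat
  obtain ⟨n, hn⟩ := ((hφ.eventually_le_const hρ).and
    (((tendsto_integral_norm_mollify_sub hφ hg).eventually_le_const hδ).and
      ((tendsto_integral_norm_mollify_sub hφ hh).eventually_le_const hδ))).exists
  exact ⟨φ n, hn⟩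

end Mollification

section Depth

variable {X : Type*} [PseudoMetricSpace X]

/-- `d` is a depth function of the open set `Ω`: a regularized distance to the complement which
also decays at infinity, so that its superlevel sets exhaust `Ω` by compact sets. -/
structure IsDepth (Ω : Set X) (d : X → ℝ) : Prop where
  lipschitz : LipschitzWith 1 d
  pos_iff : ∀ x, 0 < d x ↔ x ∈ Ω
  isCompact_le : ∀ r > 0, IsCompact {x | r ≤ d x}

namespace IsDepth

variable {Ω : Set X} {d : X → ℝ}

theorem subset (h : IsDepth Ω d) {r : ℝ} (hr : 0 < r) : {x | r ≤ d x} ⊆ Ω :=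
  fun x hx => (h.pos_iff x).1 (hr.trans_le hx)

theorem le_add_dist (h : IsDepth Ω d) (x y : X) : d x ≤ d y + dist x y := by
  simpa using h.lipschitz.le_add_mul x y

theorem nonpos (h : IsDepth Ω d) {x : X} (hx : x ∉ Ω) : d x ≤ 0 :=
  not_lt.1 fun hpos => hx ((h.pos_iff x).1 hpos)

theorem ball_subset (h : IsDepth Ω d) {x : X} {r : ℝ} (hr : r ≤ d x) : ball x r ⊆ Ω := by
  intro y hy
  rw [← h.pos_iff]
  linarith [h.le_add_dist x y, mem_ball'.1 hy]

theorem exists_half_pow_lt (h : IsDepth Ω d) {K : Set X} (hK : IsCompact K)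
    (hKΩ : K ⊆ Ω) : ∃ N : ℕ, ∀ x ∈ K, (1 / 2 : ℝ) ^ N < d x := by
  rcases K.eq_empty_or_nonempty with rfl | hne
  · exact ⟨0, by simp⟩
  obtain ⟨x₀, hx₀, hmin⟩ := hK.exists_isMinOn hne h.lipschitz.continuous.continuousOn
  obtain ⟨N, hN⟩ := exists_pow_lt_of_lt_one ((h.pos_iff x₀).2 (hKΩ hx₀)) one_half_lt_one
  exact ⟨N, fun x hx => hN.trans_le (hmin hx)⟩

end IsDepth

variable {E : Type*} [SeminormedAddCommGroup E]

theorem isDepth_univ [ProperSpace E] : IsDepth univ (fun x : E => (1 + ‖x‖)⁻¹) where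
  lipschitz := LipschitzWith.of_le_add fun x y => by
    have hx : 0 < 1 + ‖x‖ := by positivity
    have hy : 0 < 1 + ‖y‖ := by positivity
    have hxy : ‖y‖ ≤ ‖x‖ + dist x y := by
      rw [dist_eq_norm']; linarith [norm_sub_norm_le y x]
    have : 1 + ‖y‖ ≤ (1 + dist x y * (1 + ‖y‖)) * (1 + ‖x‖) := by
      nlinarith [mul_nonneg (dist_nonneg (x := x) (y := y)) (norm_nonneg x),
        mul_nonneg (dist_nonneg (x := x) (y := y)) (norm_nonneg y),
        mul_nonneg (mul_nonneg (dist_nonneg (x := x) (y := y)) (norm_nonneg y)) (norm_nonneg x)]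
    have h := div_le_div_of_nonneg_right this (mul_pos hx hy).le
    field_simp at h ⊢
    linarith
  pos_iff x := by simpa using (by positivity : 0 < 1 + ‖x‖)
  isCompact_le r hr := by
    refine (isCompact_closedBall (0 : E) r⁻¹).of_isClosed_subset (isClosed_le continuous_const
      (Continuous.inv₀ (by fun_prop) fun x => by positivity)) fun x hx => ?_
    have : 1 + ‖x‖ ≤ r⁻¹ := (le_inv_comm₀ hr (by positivity)).1 hx
    rw [mem_closedBall_zero_iff]
    linarith

theorem exists_isDepth [ProperSpace E] {Ω : Set E} (hΩ : IsOpen Ω) : ∃ d, IsDepth Ω d := by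
  rcases eq_or_ne Ω univ with rfl | hne
  · exact ⟨_, isDepth_univ⟩
  have hne' : (Ωᶜ).Nonempty := nonempty_compl.2 hne
  refine ⟨fun x => min (infDist x Ωᶜ) (1 + ‖x‖)⁻¹, ?_, fun x => ?_, fun r hr => ?_⟩
  · simpa using (lipschitz_infDist_pt Ωᶜ).min (isDepth_univ (E := E)).lipschitz
  · rw [lt_min_iff, and_iff_left ((isDepth_univ.pos_iff x).2 (mem_univ x)),
      ← hΩ.isClosed_compl.notMem_iff_infDist_pos hne', notMem_compl_iff]
  · exact (isDepth_univ.isCompact_le r hr).of_isClosed_subset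
      (isClosed_le continuous_const ((continuous_infDist_pt _).min
        isDepth_univ.lipschitz.continuous)) fun x (hx : r ≤ min _ _) =>
        show r ≤ _ from hx.trans (min_le_right _ _)

end Depth

section Partition

variable {E : Type*} [NormedAddCommGroup E] [NormedSpace ℝ E]

theorem half_pow_le_half_pow {m n : ℕ} (h : m ≤ n) : (1 / 2 : ℝ) ^ n ≤ (1 / 2) ^ m :=
  pow_le_pow_of_le_one (by norm_num) (by norm_num) h

theorem half_pow_succ_lt (n : ℕ) : (1 / 2 : ℝ) ^ (n + 1) < (1 / 2) ^ n :=
  pow_lt_pow_right_of_lt_one₀ (by norm_num) (by norm_num) n.lt_succ_self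

/-- A smooth partition of unity of `{x | 0 < d x}` subordinate to the dyadic shells
`2⁻⁽ʲ⁺¹⁾ < d x < 2⁻⁽ʲ⁻¹⁾`; the zeroth shell `1 / 2 < d x` has no upper bound. -/
structure ShellPartition (d : E → ℝ) where
  toFun : ℕ → E → ℝ
  contDiff : ∀ j, ContDiff ℝ ∞ (toFun j)
  lower : ∀ j, ∀ x ∈ tsupport (toFun j), (1 / 2 : ℝ) ^ (j + 1) < d x
  nonneg : ∀ j x, 0 ≤ toFun j x
  upper : ∀ j x, toFun (j + 1) x ≠ 0 → d x < (1 / 2 : ℝ) ^ j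
  sum_eq_one : ∀ N x, (1 / 2 : ℝ) ^ N ≤ d x → ∑ j ∈ Finset.range (N + 1), toFun j x = 1
  sum_le_one : ∀ N x, ∑ j ∈ Finset.range N, toFun j x ≤ 1

variable {Ω : Set E} {d : E → ℝ}

theorem ShellPartition.hasCompactSupport (h : IsDepth Ω d) (ζ : ShellPartition d) (j : ℕ) :
    HasCompactSupport (ζ.toFun j) :=
  (h.isCompact_le ((1 / 2) ^ (j + 1)) (by positivity)).of_isClosed_subset (isClosed_tsupport _)
    fun x hx => show _ ≤ d x from (ζ.lower j x hx).le

theorem ShellPartition.sum_fderiv_eq_zero (h : IsDepth Ω d) (ζ : ShellPartition d) {N : ℕ} {x : E}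
    (hx : (1 / 2 : ℝ) ^ N < d x) :
    ∑ j ∈ Finset.range (N + 1), fderiv ℝ (ζ.toFun j) x = 0 := by
  have hone : (fun y => ∑ j ∈ Finset.range (N + 1), ζ.toFun j y) =ᶠ[𝓝 x] fun _ => 1 := by
    filter_upwards [h.lipschitz.continuous.continuousAt.eventually_const_lt hx] with y hy
      using ζ.sum_eq_one N y hy.le
  rw [← fderiv_fun_sum fun j _ => (ζ.contDiff j).differentiable (by simp) x, hone.fderiv_eq,
    fderiv_fun_const]
  rfl

variable [FiniteDimensional ℝ E]

theorem exists_contDiff_eq_one_of_isCompact {K U : Set E} (hK : IsCompact K) (hU : IsOpen U)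
    (hKU : K ⊆ U) : ∃ χ : E → ℝ, ContDiff ℝ ∞ χ ∧ HasCompactSupport χ ∧ tsupport χ ⊆ U ∧
      (∀ x, χ x ∈ Icc (0 : ℝ) 1) ∧ ∀ x ∈ K, χ x = 1 := by
  obtain ⟨L, hL, hKL, hLU⟩ := exists_compact_between hK hU hKU
  obtain ⟨χ, hχ, hrange, hsupp, h1⟩ := exists_contMDiff_support_eq_eq_one_iff
    (modelWithCornersSelf ℝ E) (n := ⊤) isOpen_interior hK.isClosed hKL
  have htsupp : tsupport χ ⊆ L :=
    closure_minimal (hsupp.trans_subset interior_subset) hL.isClosed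
  exact ⟨χ, hχ.contDiff, hL.of_isClosed_subset (isClosed_tsupport χ) htsupp, htsupp.trans hLU,
    fun x => hrange (mem_range_self x), fun x hx => (h1 x).1 hx⟩

theorem nonempty_shellPartition (h : IsDepth Ω d) : Nonempty (ShellPartition d) := by
  choose χ hsm _ hsupp hχ h1 using fun j : ℕ => exists_contDiff_eq_one_of_isCompact
    (h.isCompact_le ((1 / 2) ^ j) (by positivity))
    (isOpen_lt continuous_const h.lipschitz.continuous)
    (fun x hx => (half_pow_succ_lt j).trans_le hx : _ ⊆ {x | (1 / 2 : ℝ) ^ (j + 1) < d x})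
  have hmono : ∀ j x, χ j x ≤ χ (j + 1) x := fun j x => by
    by_cases hx : x ∈ tsupport (χ j)
    · exact (hχ j x).2.trans_eq (h1 (j + 1) x (show _ ≤ d x from (hsupp j hx).le)).symm
    · exact (image_eq_zero_of_notMem_tsupport hx).trans_le (hχ (j + 1) x).1
  let ζ : ℕ → E → ℝ := fun j => Nat.casesOn j (χ 0) fun j => χ (j + 1) - χ j
  have hsum : ∀ N x, ∑ j ∈ Finset.range (N + 1), ζ j x = χ N x := fun N x => by
    induction N with
    | zero => simp [ζ]
    | succ N ih => simp [Finset.sum_range_succ _ (N + 1), ih, ζ]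
  refine ⟨ζ, ?_, ?_, ?_, ?_, fun N x hx => (hsum N x).trans (h1 N x hx), ?_⟩
  · rintro (_ | j)
    exacts [hsm 0, (hsm (j + 1)).sub (hsm j)]
  · rintro (_ | j)
    · exact fun x hx => hsupp 0 hx
    · exact fun x hx => (tsupport_sub _ _ hx).elim (fun hx => hsupp (j + 1) hx)
        fun hx => (half_pow_succ_lt (j + 1)).trans (hsupp j hx)
  · rintro (_ | j) x
    exacts [(hχ 0 x).1, sub_nonneg.2 (hmono j x)]
  · intro j x
    contrapose!
    intro hx
    simp [ζ, h1 j x hx, h1 (j + 1) x ((half_pow_succ_lt j).le.trans hx)]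
  · rintro (_ | N) x
    · simp
    · exact (hsum N x).trans_le (hχ N x).2

end Partition

section FirstOrderOperator

variable {E F : Type*} [NormedAddCommGroup E] [NormedSpace ℝ E] [NormedAddCommGroup F]
  [NormedSpace ℝ F]

theorem contDiff_of_contDiffOn_of_tsupport_subset {Ω : Set E} (hΩ : IsOpen Ω) {n : ℕ∞ω}
    {f : E → F} (hf : ContDiffOn ℝ n f Ω) (hs : tsupport f ⊆ Ω) : ContDiff ℝ n f := by
  rw [contDiff_iff_contDiffAt]
  intro x
  by_cases hx : x ∈ tsupport f
  · exact hf.contDiffAt (hΩ.mem_nhds (hs hx))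
  · exact contDiffAt_const.congr_of_eventuallyEq (notMem_tsupport_iff_eventuallyEq.1 hx)

/-- The principal symbol of the first-order differential operator `ξ ↦ L (Dξ)`; for the divergence
it is the identity, up to the Riesz isomorphism. -/
def symbol (L : (E →L[ℝ] F) →L[ℝ] ℝ) : (E →L[ℝ] ℝ) →L[ℝ] (F →L[ℝ] ℝ) :=
  ContinuousLinearMap.compL ℝ F (E →L[ℝ] F) ℝ L ∘L ContinuousLinearMap.smulRightL ℝ E F

theorem symbol_apply (L : (E →L[ℝ] F) →L[ℝ] ℝ) (p : E →L[ℝ] ℝ) (w : F) :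
    symbol L p w = L (p.smulRight w) :=
  rfl

theorem apply_fderiv_smul (L : (E →L[ℝ] F) →L[ℝ] ℝ) {f : E → ℝ} {ξ : E → F} {x : E}
    (hf : DifferentiableAt ℝ f x) (hξ : DifferentiableAt ℝ ξ x) :
    L (fderiv ℝ (fun y => f y • ξ y) x) =
      f x * L (fderiv ℝ ξ x) + symbol L (fderiv ℝ f x) (ξ x) := by
  rw [fderiv_fun_smul hf hξ, map_add, map_smul, smul_eq_mul, symbol_apply]

theorem continuous_apply_fderiv (L : (E →L[ℝ] F) →L[ℝ] ℝ) {ξ : E → F} (hξ : ContDiff ℝ 1 ξ) :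
    Continuous fun x => L (fderiv ℝ ξ x) :=
  L.continuous.comp (hξ.continuous_fderiv one_ne_zero)

theorem hasCompactSupport_apply_fderiv (L : (E →L[ℝ] F) →L[ℝ] ℝ) {ξ : E → F}
    (hc : HasCompactSupport ξ) : HasCompactSupport fun x => L (fderiv ℝ ξ x) :=
  (hc.fderiv ℝ).comp_left (map_zero L)

theorem apply_fderiv_eq_zero (L : (E →L[ℝ] F) →L[ℝ] ℝ) {ξ : E → F} {x : E}
    (hx : x ∉ tsupport ξ) : L (fderiv ℝ ξ x) = 0 := by
  rw [image_eq_zero_of_notMem_tsupport fun h => hx (tsupport_fderiv_subset ℝ h), map_zero]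

variable [MeasurableSpace E] [BorelSpace E] {μ : Measure E}

theorem integrable_mul_apply_fderiv [IsFiniteMeasureOnCompacts μ] (L : (E →L[ℝ] F) →L[ℝ] ℝ)
    {u : E → ℝ} (hu : LocallyIntegrable u μ) {ξ : E → F} (hξ : ContDiff ℝ 1 ξ)
    (hc : HasCompactSupport ξ) : Integrable (fun x => u x * L (fderiv ℝ ξ x)) μ :=
  hu.integrable_smul_right_of_hasCompactSupport (continuous_apply_fderiv L hξ)
    (hasCompactSupport_apply_fderiv L hc)

theorem integrable_clm_apply_of_hasCompactSupport [IsFiniteMeasureOnCompacts μ] {Ω : Set E}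
    (hΩ : IsOpen Ω) {p : E → F →L[ℝ] ℝ} (hp : ContinuousOn p Ω) {ξ : E → F} (hξ : Continuous ξ)
    (hc : HasCompactSupport ξ) (hs : tsupport ξ ⊆ Ω) : Integrable (fun x => p x (ξ x)) μ := by
  have hsub : tsupport (fun x => p x (ξ x)) ⊆ tsupport ξ :=
    closure_mono fun x => mt fun hx => by simp [hx]
  refine Continuous.integrable_of_hasCompactSupport (contDiff_zero (𝕜 := ℝ).1
    (contDiff_of_contDiffOn_of_tsupport_subset hΩ ?_ (hsub.trans hs)))
    (hc.mono' ((subset_tsupport _).trans hsub))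
  exact contDiffOn_zero.2 (hp.clm_apply hξ.continuousOn)

variable [FiniteDimensional ℝ E] [μ.IsAddHaarMeasure]

theorem integral_fderiv_eq_zero {ξ : E → F} (hξ : ContDiff ℝ 1 ξ) (hc : HasCompactSupport ξ) :
    ∫ x, fderiv ℝ ξ x ∂μ = 0 := by
  have hint : Integrable (fderiv ℝ ξ) μ :=
    (hξ.continuous_fderiv one_ne_zero).integrable_of_hasCompactSupport (hc.fderiv ℝ)
  ext e
  have := integral_smul_fderiv_eq_neg_fderiv_smul_of_integrable (μ := μ)
    (f := fun _ => (1 : ℝ)) (g := ξ) (v := e) (by simp)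
    (by simpa using hint.apply_continuousLinearMap e)
    (by simpa using hξ.continuous.integrable_of_hasCompactSupport hc)
    (fun _ _ => by fun_prop) (fun x _ => hξ.differentiable one_ne_zero x)
  simpa [ContinuousLinearMap.integral_apply hint] using this

variable [CompleteSpace F]

theorem integral_apply_fderiv_eq_zero (L : (E →L[ℝ] F) →L[ℝ] ℝ) {ξ : E → F}
    (hξ : ContDiff ℝ 1 ξ) (hc : HasCompactSupport ξ) : ∫ x, L (fderiv ℝ ξ x) ∂μ = 0 := by
  rw [L.integral_comp_comm ((hξ.continuous_fderiv one_ne_zero).integrable_of_hasCompactSupport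
    (hc.fderiv ℝ)), integral_fderiv_eq_zero hξ hc, map_zero]

theorem setIntegral_mul_apply_fderiv (L : (E →L[ℝ] F) →L[ℝ] ℝ) {Ω : Set E} (hΩ : IsOpen Ω)
    {v : E → ℝ} (hv : ContDiffOn ℝ 1 v Ω) {ξ : E → F} (hξ : ContDiff ℝ 1 ξ)
    (hc : HasCompactSupport ξ) (hs : tsupport ξ ⊆ Ω) :
    ∫ x in Ω, v x * L (fderiv ℝ ξ x) ∂μ =
      -∫ x in Ω, symbol L (fderivWithin ℝ v Ω x) (ξ x) ∂μ := by
  set w : E → F := fun y => v y • ξ y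
  have hws : tsupport w ⊆ tsupport ξ := closure_mono (Function.support_smul_subset_right _ _)
  have hwc : HasCompactSupport w := hc.mono' ((subset_tsupport w).trans hws)
  have hw : ContDiff ℝ 1 w := contDiff_of_contDiffOn_of_tsupport_subset hΩ
    (hv.smul hξ.contDiffOn) (hws.trans hs)
  have hproduct : ∀ x ∈ Ω, v x * L (fderiv ℝ ξ x) =
      L (fderiv ℝ w x) - symbol L (fderivWithin ℝ v Ω x) (ξ x) := fun x hx => by
    rw [fderivWithin_of_isOpen hΩ hx, apply_fderiv_smul L
      ((hv.contDiffAt (hΩ.mem_nhds hx)).differentiableAt one_ne_zero)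
      (hξ.differentiable one_ne_zero x), add_sub_cancel_right]
  have hsymbol : Integrable (fun x => symbol L (fderivWithin ℝ v Ω x) (ξ x)) μ :=
    integrable_clm_apply_of_hasCompactSupport hΩ ((symbol L).continuous.comp_continuousOn
      (hv.continuousOn_fderivWithin hΩ.uniqueDiffOn le_rfl)) hξ.continuous hc hs
  rw [setIntegral_congr_fun hΩ.measurableSet hproduct, integral_sub _ hsymbol.integrableOn,
    setIntegral_eq_integral_of_forall_compl_eq_zero
      fun x hx => apply_fderiv_eq_zero L fun h => hx (hs (hws h)),
    integral_apply_fderiv_eq_zero L hw hwc, zero_sub]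
  exact ((continuous_apply_fderiv L hw).integrable_of_hasCompactSupport
    (hasCompactSupport_apply_fderiv L hwc)).integrableOn

end FirstOrderOperator

theorem sub_le_sq_div_sqrt {a δ : ℝ} (ha : 0 ≤ a) (hδ : 0 < δ) :
    a - δ ≤ a ^ 2 / √(a ^ 2 + δ ^ 2) := by
  have hs : 0 < √(a ^ 2 + δ ^ 2) := Real.sqrt_pos.2 (by positivity)
  have hle : √(a ^ 2 + δ ^ 2) ≤ a + δ := Real.sqrt_le_iff.2 ⟨by positivity, by nlinarith⟩
  rw [le_div_iff₀ hs]
  rcases le_total a δ with _ | h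
  · nlinarith [sq_nonneg a]
  · nlinarith [mul_le_mul_of_nonneg_left hle (sub_nonneg.2 h), sq_nonneg δ]

section DescentField

variable {X F : Type*} [NormedAddCommGroup F] [InnerProductSpace ℝ F] [CompleteSpace F]

variable (F) in
theorem contDiff_toDual_symm {n : ℕ∞ω} :
    ContDiff ℝ n fun p : StrongDual ℝ F => (InnerProductSpace.toDual ℝ F).symm p :=
  ((InnerProductSpace.toDual ℝ F).symm.toLinearIsometry.toContinuousLinearMap :
    StrongDual ℝ F →L[ℝ] F).contDiff

theorem apply_toDual_symm_self (p : StrongDual ℝ F) :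
    p ((InnerProductSpace.toDual ℝ F).symm p) = ‖p‖ ^ 2 := by
  rw [← InnerProductSpace.toDual_symm_apply, real_inner_self_eq_norm_sq,
    LinearIsometryEquiv.norm_map]

/-- The field `-χ p / √(|p|² + δ²)`, where the covector field `p` is identified with a vector
field. It is nearly optimal for the variation: it pairs with `p` to almost `-χ |p|`. -/
def descentField (p : X → F →L[ℝ] ℝ) (χ : X → ℝ) (δ : ℝ) (x : X) : F :=
  -(χ x / √(‖p x‖ ^ 2 + δ ^ 2)) • (InnerProductSpace.toDual ℝ F).symm (p x)

theorem neg_apply_descentField (p : X → F →L[ℝ] ℝ) (χ : X → ℝ) (δ : ℝ) (x : X) :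
    -p x (descentField p χ δ x) = χ x * (‖p x‖ ^ 2 / √(‖p x‖ ^ 2 + δ ^ 2)) := by
  rw [descentField, map_smul, smul_eq_mul, apply_toDual_symm_self]
  ring

theorem norm_descentField_le (p : X → F →L[ℝ] ℝ) (χ : X → ℝ) (δ : ℝ) (x : X) :
    ‖descentField p χ δ x‖ ≤ |χ x| := by
  rw [descentField, norm_smul, norm_neg, norm_div, LinearIsometryEquiv.norm_map, Real.norm_eq_abs,
    Real.norm_of_nonneg (Real.sqrt_nonneg _), div_mul_eq_mul_div, mul_div_assoc]
  refine mul_le_of_le_one_right (abs_nonneg _) (div_le_one_of_le₀ ?_ (Real.sqrt_nonneg _))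
  exact Real.le_sqrt_of_sq_le (by nlinarith)

end DescentField

section Variation

variable {E F : Type*} [NormedAddCommGroup E] [NormedSpace ℝ E]

/-- `C¹` fields with compact support in `Ω` and values in the closed unit ball. -/
structure IsTestField [NormedAddCommGroup F] [NormedSpace ℝ F] (Ω : Set E) (ξ : E → F) : Prop where
  contDiff : ContDiff ℝ 1 ξ
  hasCompactSupport : HasCompactSupport ξ
  tsupport_subset : tsupport ξ ⊆ Ω
  norm_le_one : ∀ x, ‖ξ x‖ ≤ 1

theorem isTestField_zero [NormedAddCommGroup F] [NormedSpace ℝ F] (Ω : Set E) :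
    IsTestField Ω (fun _ => (0 : F)) where
  contDiff := contDiff_const
  hasCompactSupport := HasCompactSupport.zero
  tsupport_subset := by simp [tsupport]
  norm_le_one := by simp

section Definition

variable [NormedAddCommGroup F] [NormedSpace ℝ F] [MeasurableSpace E]

/-- The test values `∫_Ω u L(Dξ)` for the variation of `u` on `Ω` along the operator
`ξ ↦ L (Dξ)`. -/
def variationSet (μ : Measure E) (L : (E →L[ℝ] F) →L[ℝ] ℝ) (Ω : Set E) (u : E → ℝ) : Set ℝ :=
  {a | ∃ ξ : E → F, IsTestField Ω ξ ∧ a = ∫ x in Ω, u x * L (fderiv ℝ ξ x) ∂μ}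

/-- The variation of `u` on `Ω` along the operator `ξ ↦ L (Dξ)`; the total variation is the case
of the divergence, and the directional variations are those of the partial derivatives. The
junk value of an infinite variation is `0`. -/
def variation (μ : Measure E) (L : (E →L[ℝ] F) →L[ℝ] ℝ) (Ω : Set E) (u : E → ℝ) : ℝ :=
  sSup (variationSet μ L Ω u)

theorem zero_mem_variationSet (μ : Measure E) (L : (E →L[ℝ] F) →L[ℝ] ℝ) (Ω : Set E) (u : E → ℝ) :
    0 ∈ variationSet μ L Ω u :=
  ⟨_, isTestField_zero Ω, by simp⟩

theorem IsTestField.setIntegral_le_variation {μ : Measure E} {L : (E →L[ℝ] F) →L[ℝ] ℝ} {Ω : Set E}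
    {u : E → ℝ} (hu : BddAbove (variationSet μ L Ω u)) {ξ : E → F} (hξ : IsTestField Ω ξ) :
    ∫ x in Ω, u x * L (fderiv ℝ ξ x) ∂μ ≤ variation μ L Ω u :=
  le_csSup hu ⟨ξ, hξ, rfl⟩

end Definition

theorem isTestField_descentField [NormedAddCommGroup F] [InnerProductSpace ℝ F] [CompleteSpace F]
    {Ω : Set E} (hΩ : IsOpen Ω) {p : E → F →L[ℝ] ℝ}
    (hp : ContDiffOn ℝ 1 p Ω) {χ : E → ℝ} (hχ : ContDiff ℝ 1 χ) (hc : HasCompactSupport χ)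
    (hs : tsupport χ ⊆ Ω) (hχ1 : ∀ x, |χ x| ≤ 1) {δ : ℝ} (hδ : 0 < δ) :
    IsTestField Ω (descentField p χ δ) := by
  have hsub : tsupport (descentField p χ δ) ⊆ tsupport χ :=
    closure_mono fun x => mt fun hx => by simp [descentField, hx]
  have hpos : ∀ x, 0 < ‖p x‖ ^ 2 + δ ^ 2 := fun x => by positivity
  have hG : ContDiffOn ℝ 1 (fun x => (InnerProductSpace.toDual ℝ F).symm (p x)) Ω :=
    (contDiff_toDual_symm F).comp_contDiffOn hp
  have hnorm : ContDiffOn ℝ 1 (fun x => √(‖p x‖ ^ 2 + δ ^ 2)) Ω := by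
    simp_rw [← LinearIsometryEquiv.norm_map (InnerProductSpace.toDual ℝ F).symm (p _)] at hpos ⊢
    exact ((hG.norm_sq ℝ).add contDiffOn_const).sqrt fun x _ => (hpos x).ne'
  refine ⟨contDiff_of_contDiffOn_of_tsupport_subset hΩ ?_ (hsub.trans hs),
    hc.mono' ((subset_tsupport _).trans hsub), hsub.trans hs,
    fun x => (norm_descentField_le p χ δ x).trans (hχ1 x)⟩
  exact (hχ.contDiffOn.div hnorm fun x _ => (Real.sqrt_pos.2 (hpos x)).ne').neg.smul hG

theorem continuousOn_norm_symbol [NormedAddCommGroup F] [NormedSpace ℝ F]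
    (L : (E →L[ℝ] F) →L[ℝ] ℝ) {Ω : Set E} (hΩ : IsOpen Ω) {v : E → ℝ} (hv : ContDiffOn ℝ 1 v Ω) :
    ContinuousOn (fun x => ‖symbol L (fderivWithin ℝ v Ω x)‖) Ω :=
  ((symbol L).continuous.comp_continuousOn
    (hv.continuousOn_fderivWithin hΩ.uniqueDiffOn le_rfl)).norm

section Convergence

variable [NormedAddCommGroup F] [NormedSpace ℝ F] [MeasurableSpace E] [BorelSpace E]
  {μ : Measure E} [IsFiniteMeasureOnCompacts μ] {Ω : Set E} {L : (E →L[ℝ] F) →L[ℝ] ℝ} {ι : Type*}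
  {l : Filter ι} {u : E → ℝ} {v : ι → E → ℝ}

theorem tendsto_setIntegral_mul_apply_fderiv (hu : IntegrableOn u Ω μ)
    (hv : ∀ i, IntegrableOn (v i) Ω μ)
    (hlim : Tendsto (fun i => ∫ x in Ω, |v i x - u x| ∂μ) l (𝓝 0)) {ξ : E → F}
    (hξ : IsTestField Ω ξ) :
    Tendsto (fun i => ∫ x in Ω, v i x * L (fderiv ℝ ξ x) ∂μ) l
      (𝓝 (∫ x in Ω, u x * L (fderiv ℝ ξ x) ∂μ)) := by
  obtain ⟨C, hC⟩ := (hasCompactSupport_apply_fderiv L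
    hξ.hasCompactSupport).exists_bound_of_continuous (continuous_apply_fderiv L hξ.contDiff)
  have hmul : ∀ {f : E → ℝ}, IntegrableOn f Ω μ →
      IntegrableOn (fun x => f x * L (fderiv ℝ ξ x)) Ω μ := fun hf =>
    integrable_mul_apply_fderiv L hf.locallyIntegrable hξ.contDiff hξ.hasCompactSupport
  rw [tendsto_iff_dist_tendsto_zero]
  refine squeeze_zero (fun _ => dist_nonneg) (fun i => ?_) (by simpa using hlim.mul_const C)
  rw [dist_eq_norm, ← integral_sub (hmul (hv i)) (hmul hu), ← integral_mul_const]
  refine norm_integral_le_of_norm_le (((hv i).sub hu).abs.mul_const C)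
    (Eventually.of_forall fun x => ?_)
  rw [← sub_mul, norm_mul, Real.norm_eq_abs]
  exact mul_le_mul_of_nonneg_left (hC x) (abs_nonneg _)

end Convergence

variable [FiniteDimensional ℝ E] [MeasurableSpace E] [BorelSpace E] {μ : Measure E} {Ω : Set E}

theorem integrableOn_and_setIntegral_le_of_forall_isCompact [IsLocallyFiniteMeasure μ]
    (hΩ : IsOpen Ω) {f : E → ℝ} (hf : ContinuousOn f Ω) (hf0 : ∀ x, 0 ≤ f x) {M : ℝ}
    (hM : ∀ K ⊆ Ω, IsCompact K → ∫ x in K, f x ∂μ ≤ M) :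
    IntegrableOn f Ω μ ∧ ∫ x in Ω, f x ∂μ ≤ M := by
  have : ProperSpace E := FiniteDimensional.proper ℝ E
  obtain ⟨d, hd⟩ := exists_isDepth hΩ
  have hpos : ∀ n : ℕ, 0 < 1 / ((n : ℝ) + 1) := fun n => by positivity
  have hcompact : ∀ n : ℕ, IsCompact {x | 1 / ((n : ℝ) + 1) ≤ d x} :=
    fun n => hd.isCompact_le _ (hpos n)
  have hcover : AECover (μ.restrict Ω) atTop fun n : ℕ => {x | 1 / ((n : ℝ) + 1) ≤ d x} := by
    refine ⟨(ae_restrict_iff' hΩ.measurableSet).2 (Eventually.of_forall fun x hx => ?_),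
      fun n => (hcompact n).measurableSet⟩
    exact tendsto_one_div_add_atTop_nhds_zero_nat.eventually_le_const ((hd.pos_iff x).2 hx)
  have hrestrict : ∀ n : ℕ, (μ.restrict Ω).restrict {x | 1 / ((n : ℝ) + 1) ≤ d x} =
      μ.restrict {x | 1 / ((n : ℝ) + 1) ≤ d x} := fun n => by
    rw [Measure.restrict_restrict (hcompact n).measurableSet,
      inter_eq_self_of_subset_left (hd.subset (hpos n))]
  have hbound : ∀ n : ℕ, ∫ x in {x | 1 / ((n : ℝ) + 1) ≤ d x}, f x ∂μ.restrict Ω ≤ M :=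
    fun n => by rw [hrestrict]; exact hM _ (hd.subset (hpos n)) (hcompact n)
  have hint : IntegrableOn f Ω μ := by
    refine hcover.integrable_of_integral_norm_bounded M (fun n => ?_)
      (Eventually.of_forall fun n => by simpa only [Real.norm_of_nonneg (hf0 _)] using hbound n)
    rw [IntegrableOn, hrestrict]
    exact (hf.mono (hd.subset (hpos n))).integrableOn_compact (hcompact n)
  exact ⟨hint, le_of_tendsto' (hcover.integral_tendsto_of_countably_generated hint) hbound⟩

variable [μ.IsAddHaarMeasure] [NormedAddCommGroup F] [InnerProductSpace ℝ F] [CompleteSpace F]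
  {L : (E →L[ℝ] F) →L[ℝ] ℝ} {v : E → ℝ}

theorem IsTestField.setIntegral_le_integral_norm_symbol (hΩ : IsOpen Ω) (hv : ContDiffOn ℝ 1 v Ω)
    (hi : IntegrableOn (fun x => ‖symbol L (fderivWithin ℝ v Ω x)‖) Ω μ) {ξ : E → F}
    (hξ : IsTestField Ω ξ) : ∫ x in Ω, v x * L (fderiv ℝ ξ x) ∂μ ≤
      ∫ x in Ω, ‖symbol L (fderivWithin ℝ v Ω x)‖ ∂μ := by
  rw [setIntegral_mul_apply_fderiv L hΩ hv hξ.contDiff hξ.hasCompactSupport hξ.tsupport_subset]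
  exact (neg_le_abs _).trans (norm_integral_le_of_norm_le hi (Eventually.of_forall fun x =>
    (symbol L (fderivWithin ℝ v Ω x)).unit_le_opNorm _ (hξ.norm_le_one x)))

theorem setIntegral_norm_symbol_sub_le_of_isCompact (hΩ : IsOpen Ω) (hv : ContDiffOn ℝ 2 v Ω)
    {M : ℝ} (hM : ∀ ξ : E → F, IsTestField Ω ξ → ∫ x in Ω, v x * L (fderiv ℝ ξ x) ∂μ ≤ M)
    {K : Set E} (hKΩ : K ⊆ Ω) (hK : IsCompact K) {δ : ℝ} (hδ : 0 < δ) :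
    ∫ x in K, (‖symbol L (fderivWithin ℝ v Ω x)‖ - δ) ∂μ ≤ M := by
  set p := fun x => symbol L (fderivWithin ℝ v Ω x)
  have hv1 : ContDiffOn ℝ 1 v Ω := hv.of_le one_le_two
  have hp : ContDiffOn ℝ 1 p Ω := (symbol L).contDiff.comp_contDiffOn
    (hv.fderivWithin hΩ.uniqueDiffOn (by norm_num))
  have hint : IntegrableOn (fun x => ‖p x‖) K μ :=
    (hp.continuousOn.norm.mono hKΩ).integrableOn_compact hK
  obtain ⟨χ, hχ, hc, hs, hχ01, hχK⟩ := exists_contDiff_eq_one_of_isCompact hK hΩ hKΩ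
  set ξ := descentField p χ δ
  have hξ : IsTestField Ω ξ := isTestField_descentField hΩ hp (hχ.of_le (by simp)) hc hs
    (fun x => abs_le.2 ⟨by linarith [(hχ01 x).1], (hχ01 x).2⟩) hδ
  have hnonneg : ∀ x, 0 ≤ -p x (ξ x) := fun x => by
    rw [neg_apply_descentField]; exact mul_nonneg (hχ01 x).1 (by positivity)
  have hξint : IntegrableOn (fun x => -p x (ξ x)) Ω μ :=
    (integrable_clm_apply_of_hasCompactSupport hΩ hp.continuousOn hξ.contDiff.continuous
      hξ.hasCompactSupport hξ.tsupport_subset).neg.integrableOn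
  calc ∫ x in K, (‖p x‖ - δ) ∂μ ≤ ∫ x in K, -p x (ξ x) ∂μ := by
        refine setIntegral_mono_on (hint.sub (integrableOn_const hK.measure_ne_top))
          (hξint.mono_set hKΩ) hK.measurableSet fun x hx => ?_
        rw [neg_apply_descentField, hχK x hx, one_mul]
        exact sub_le_sq_div_sqrt (norm_nonneg _) hδ
    _ ≤ ∫ x in Ω, -p x (ξ x) ∂μ := setIntegral_mono_set hξint
        (Eventually.of_forall hnonneg) hKΩ.eventuallyLE
    _ = ∫ x in Ω, v x * L (fderiv ℝ ξ x) ∂μ := by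
        rw [integral_neg, setIntegral_mul_apply_fderiv L hΩ hv1 hξ.contDiff hξ.hasCompactSupport
          hξ.tsupport_subset]
    _ ≤ M := hM ξ hξ

theorem setIntegral_norm_symbol_le_of_isCompact (hΩ : IsOpen Ω) (hv : ContDiffOn ℝ 2 v Ω) {M : ℝ}
    (hM : ∀ ξ : E → F, IsTestField Ω ξ → ∫ x in Ω, v x * L (fderiv ℝ ξ x) ∂μ ≤ M) {K : Set E}
    (hKΩ : K ⊆ Ω) (hK : IsCompact K) :
    ∫ x in K, ‖symbol L (fderivWithin ℝ v Ω x)‖ ∂μ ≤ M := by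
  have hint : IntegrableOn (fun x => ‖symbol L (fderivWithin ℝ v Ω x)‖) K μ :=
    ((continuousOn_norm_symbol L hΩ (hv.of_le one_le_two)).mono hKΩ).integrableOn_compact hK
  refine le_of_forall_pos_le_add fun ε hε => ?_
  have hε' : ε / (μ.real K + 1) * μ.real K ≤ ε := by
    rw [div_mul_eq_mul_div, div_le_iff₀ (by positivity)]
    nlinarith
  have hsub := setIntegral_norm_symbol_sub_le_of_isCompact hΩ hv hM hKΩ hK
    (δ := ε / (μ.real K + 1)) (by positivity)
  rw [integral_sub hint (integrableOn_const hK.measure_ne_top), setIntegral_const,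
    smul_eq_mul] at hsub
  linarith

theorem integrableOn_and_setIntegral_norm_symbol_le (hΩ : IsOpen Ω) (hv : ContDiffOn ℝ 2 v Ω)
    {M : ℝ} (hM : ∀ ξ : E → F, IsTestField Ω ξ → ∫ x in Ω, v x * L (fderiv ℝ ξ x) ∂μ ≤ M) :
    IntegrableOn (fun x => ‖symbol L (fderivWithin ℝ v Ω x)‖) Ω μ ∧
      ∫ x in Ω, ‖symbol L (fderivWithin ℝ v Ω x)‖ ∂μ ≤ M :=
  integrableOn_and_setIntegral_le_of_forall_isCompact hΩ
    (continuousOn_norm_symbol L hΩ (hv.of_le one_le_two)) (fun _ => norm_nonneg _)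
    fun _ => setIntegral_norm_symbol_le_of_isCompact hΩ hv hM

variable {ι : Type*} {l : Filter ι} {u : E → ℝ} {v : ι → E → ℝ}

theorem eventually_lt_integral_norm_symbol (hΩ : IsOpen Ω) (hu : IntegrableOn u Ω μ)
    (hv : ∀ i, ContDiffOn ℝ 1 (v i) Ω) (hvint : ∀ i, IntegrableOn (v i) Ω μ)
    (hDv : ∀ i, IntegrableOn (fun x => ‖symbol L (fderivWithin ℝ (v i) Ω x)‖) Ω μ)
    (hlim : Tendsto (fun i => ∫ x in Ω, |v i x - u x| ∂μ) l (𝓝 0)) {c : ℝ}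
    (hc : c < variation μ L Ω u) :
    ∀ᶠ i in l, c < ∫ x in Ω, ‖symbol L (fderivWithin ℝ (v i) Ω x)‖ ∂μ := by
  obtain ⟨_, ⟨ξ, hξ, rfl⟩, hcξ⟩ :=
    exists_lt_of_lt_csSup ⟨0, zero_mem_variationSet μ L Ω u⟩ hc
  filter_upwards [(tendsto_setIntegral_mul_apply_fderiv hu hvint hlim hξ).eventually_const_lt hcξ]
    with i hi
  exact hi.trans_le (hξ.setIntegral_le_integral_norm_symbol hΩ (hv i) (hDv i))

theorem tendsto_integral_norm_symbol_of_testField_le (hΩ : IsOpen Ω) (hu : IntegrableOn u Ω μ)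
    (hv : ∀ i, ContDiffOn ℝ 2 (v i) Ω) (hvint : ∀ i, IntegrableOn (v i) Ω μ)
    (hlim : Tendsto (fun i => ∫ x in Ω, |v i x - u x| ∂μ) l (𝓝 0)) {ε : ι → ℝ}
    (hε : Tendsto ε l (𝓝 0)) (hle : ∀ i, ∀ ξ : E → F, IsTestField Ω ξ →
      ∫ x in Ω, v i x * L (fderiv ℝ ξ x) ∂μ ≤ variation μ L Ω u + ε i) :
    (∀ i, IntegrableOn (fun x => ‖symbol L (fderivWithin ℝ (v i) Ω x)‖) Ω μ) ∧
      Tendsto (fun i => ∫ x in Ω, ‖symbol L (fderivWithin ℝ (v i) Ω x)‖ ∂μ) l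
        (𝓝 (variation μ L Ω u)) := by
  have hbound := fun i => integrableOn_and_setIntegral_norm_symbol_le hΩ (hv i) (hle i)
  refine ⟨fun i => (hbound i).1, tendsto_order.2 ⟨fun c hc => ?_, fun c hc => ?_⟩⟩
  · exact eventually_lt_integral_norm_symbol hΩ hu (fun i => (hv i).of_le one_le_two) hvint
      (fun i => (hbound i).1) hlim hc
  · have hsum : Tendsto (fun i => variation μ L Ω u + ε i) l (𝓝 (variation μ L Ω u)) := by
      simpa using hε.const_add (variation μ L Ω u)
    filter_upwards [hsum.eventually_lt_const hc] with i hi using (hbound i).2.trans_lt hi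

end Variation

section Gluing

theorem integrable_and_integral_norm_le_of_enorm_le_tsum {X V W : Type*} [MeasurableSpace X]
    {μ : Measure X} [NormedAddCommGroup V] [NormedAddCommGroup W] {f : ℕ → X → V} {g : X → W}
    (hf : ∀ j, Integrable (f j) μ) (hg : AEStronglyMeasurable g μ)
    (hfg : ∀ᵐ x ∂μ, ‖g x‖ₑ ≤ ∑' j, ‖f j x‖ₑ) {b : ℕ → ℝ} {B : ℝ} (hb : HasSum b B)
    (hfb : ∀ j, ∫ x, ‖f j x‖ ∂μ ≤ b j) : Integrable g μ ∧ ∫ x, ‖g x‖ ∂μ ≤ B := by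
  have hb0 : ∀ j, 0 ≤ b j := fun j => (integral_nonneg fun x => norm_nonneg _).trans (hfb j)
  have hle : ∫⁻ x, ‖g x‖ₑ ∂μ ≤ ENNReal.ofReal B := calc
    ∫⁻ x, ‖g x‖ₑ ∂μ ≤ ∫⁻ x, ∑' j, ‖f j x‖ₑ ∂μ := lintegral_mono_ae hfg
    _ = ∑' j, ∫⁻ x, ‖f j x‖ₑ ∂μ := lintegral_tsum fun j => (hf j).1.enorm
    _ = ∑' j, ENNReal.ofReal (∫ x, ‖f j x‖ ∂μ) := by
      simp_rw [ofReal_integral_norm_eq_lintegral_enorm (hf _)]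
    _ ≤ ∑' j, ENNReal.ofReal (b j) :=
      ENNReal.tsum_le_tsum fun j => ENNReal.ofReal_le_ofReal (hfb j)
    _ = ENNReal.ofReal B := by rw [← ENNReal.ofReal_tsum_of_nonneg hb0 hb.summable, hb.tsum_eq]
  refine ⟨⟨hg, hle.trans_lt ENNReal.ofReal_lt_top⟩, ?_⟩
  rw [integral_norm_eq_lintegral_enorm hg]
  exact ENNReal.toReal_le_of_le_ofReal (hb.nonneg hb0) hle

theorem integral_bilinear_sub_le {X V W : Type*} [MeasurableSpace X] {μ : Measure X}
    [NormedAddCommGroup V] [NormedSpace ℝ V] [NormedAddCommGroup W] [NormedSpace ℝ W]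
    (B : V →L[ℝ] W →L[ℝ] ℝ) {p q : X → V} (hp : Integrable p μ) (hq : Integrable q μ) {ξ : X → W}
    (hξ : AEStronglyMeasurable ξ μ) (hξ1 : ∀ x, ‖ξ x‖ ≤ 1) :
    (∫ x, B (p x) (ξ x) ∂μ) - ∫ x, B (q x) (ξ x) ∂μ ≤ ‖B‖ * ∫ x, ‖q x - p x‖ ∂μ := by
  have hint : ∀ {r : X → V}, Integrable r μ → Integrable (fun x => B (r x) (ξ x)) μ :=
    fun hr => B.integrable_of_bilin_of_bdd_right 1 hr hξ (Eventually.of_forall hξ1)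
  have hdom : Integrable (fun x => ‖B‖ * ‖q x - p x‖) μ := (hq.sub hp).norm.const_mul _
  rw [← integral_sub (hint hp) (hint hq), ← integral_const_mul]
  refine (le_abs_self _).trans ?_
  rw [← Real.norm_eq_abs]
  refine norm_integral_le_of_norm_le hdom (Eventually.of_forall fun x => ?_)
  rw [← sub_apply, ← map_sub, norm_sub_rev (q x)]
  exact ((B (p x - q x)).unit_le_opNorm _ (hξ1 x)).trans (B.le_opNorm _)

variable {E F : Type*} [NormedAddCommGroup E] [NormedSpace ℝ E] [NormedAddCommGroup F]
  [NormedSpace ℝ F] {Ω : Set E} {d : E → ℝ} {ζ : ShellPartition d}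

variable [MeasurableSpace E] {μ : Measure E} {U : E → ℝ}

section Integrability

variable [BorelSpace E]

theorem integrable_mul_of_locallyIntegrable (h : IsDepth Ω d) (ζ : ShellPartition d)
    (hU : LocallyIntegrable U μ) (j : ℕ) : Integrable (fun y => ζ.toFun j y * U y) μ :=
  hU.integrable_smul_left_of_hasCompactSupport (ζ.contDiff j).continuous (ζ.hasCompactSupport h j)

theorem integrable_smul_fderiv (h : IsDepth Ω d) (ζ : ShellPartition d)
    (hU : LocallyIntegrable U μ) (j : ℕ) : Integrable (fun y => U y • fderiv ℝ (ζ.toFun j) y) μ :=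
  hU.integrable_smul_right_of_hasCompactSupport ((ζ.contDiff j).continuous_fderiv (by simp))
    ((ζ.hasCompactSupport h j).fderiv ℝ)

variable [FiniteDimensional ℝ E]

theorem sum_integral_symbol_smul_fderiv_eq_zero (L : (E →L[ℝ] F) →L[ℝ] ℝ)
    (h : IsDepth Ω d) (hU : LocallyIntegrable U μ) {ξ : E → F}
    (hξ : IsTestField Ω ξ) {N : ℕ} (hN : ∀ x ∈ tsupport ξ, (1 / 2 : ℝ) ^ N < d x) :
    ∑ j ∈ Finset.range (N + 1), ∫ x, symbol L (U x • fderiv ℝ (ζ.toFun j) x) (ξ x) ∂μ = 0 := by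
  rw [← integral_finsetSum _ fun j _ => (symbol L).integrable_of_bilin_of_bdd_right 1
    (integrable_smul_fderiv h ζ hU j) hξ.contDiff.continuous.aestronglyMeasurable
    (Eventually.of_forall hξ.norm_le_one)]
  refine integral_eq_zero_of_ae (Eventually.of_forall fun x => ?_)
  by_cases hx : x ∈ tsupport ξ
  · simp only [← sum_apply, ← map_sum, ← Finset.smul_sum, ζ.sum_fderiv_eq_zero h (hN x hx),
      smul_zero, map_zero, zero_apply, Pi.zero_apply]
  · simp [image_eq_zero_of_notMem_tsupport hx]

end Integrability

variable [FiniteDimensional ℝ E]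

/-- The glued mollification `∑ⱼ ηⱼ * (ζⱼ U)`, where `ηⱼ` is the normalized bump `φ j`. -/
def glue (μ : Measure E) (ζ : ShellPartition d) (φ : ℕ → ContDiffBump (0 : E)) (U : E → ℝ)
    (x : E) : ℝ :=
  ∑' j, mollify μ (φ j) (fun y => ζ.toFun j y * U y) x

/-- The field `∑_{j < N} ζⱼ (ηⱼ * ξ)`, against which `U` is tested when the glued mollification
of `U` is tested against `ξ`. -/
def glueField (μ : Measure E) (ζ : ShellPartition d) (φ : ℕ → ContDiffBump (0 : E)) (N : ℕ)
    (ξ : E → F) (x : E) : F :=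
  ∑ j ∈ Finset.range N, ζ.toFun j x • mollify μ (φ j) ξ x

variable [BorelSpace E] [μ.IsAddHaarMeasure] {φ : ℕ → ContDiffBump (0 : E)}

theorem half_pow_lt_of_mollify_ne_zero (h : IsDepth Ω d)
    (hφ : ∀ j, (φ j).rOut ≤ (1 / 2) ^ (j + 2)) {j : ℕ} {x : E}
    (hx : mollify μ (φ j) (fun y => ζ.toFun j y * U y) x ≠ 0) : (1 / 2 : ℝ) ^ (j + 2) < d x := by
  obtain ⟨y, hxy, hy⟩ := exists_ne_zero_of_mollify_ne_zero hx
  have hlower := ζ.lower j y (subset_tsupport _ (left_ne_zero_of_mul hy))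
  have hlip := h.le_add_dist y x
  rw [dist_comm] at hlip
  have hhalf : (1 / 2 : ℝ) ^ (j + 1) = 2 * (1 / 2) ^ (j + 2) := by ring
  linarith [hφ j]

theorem mollify_eq_zero_of_half_pow_le (h : IsDepth Ω d)
    (hφ : ∀ j, (φ j).rOut ≤ (1 / 2) ^ (j + 2)) {j N : ℕ} {x : E} (hx : (1 / 2 : ℝ) ^ N ≤ d x)
    (hj : N + 2 ≤ j) : mollify μ (φ j) (fun y => ζ.toFun j y * U y) x = 0 := by
  obtain ⟨k, rfl⟩ : ∃ k, j = k + 1 := ⟨j - 1, by omega⟩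
  by_contra hne
  obtain ⟨y, hxy, hy⟩ := exists_ne_zero_of_mollify_ne_zero hne
  have hupper := ζ.upper k y (left_ne_zero_of_mul hy)
  have hlip := h.le_add_dist x y
  have hradius : (1 / 2 : ℝ) ^ (k + 1 + 2) ≤ (1 / 2) ^ k := half_pow_le_half_pow (by omega)
  have hk : (1 / 2 : ℝ) ^ k ≤ (1 / 2) ^ (N + 1) := half_pow_le_half_pow (by omega)
  have hhalf : (1 / 2 : ℝ) ^ N = 2 * (1 / 2) ^ (N + 1) := by ring
  linarith [hφ (k + 1)]

theorem glue_eq_sum (h : IsDepth Ω d) (hφ : ∀ j, (φ j).rOut ≤ (1 / 2) ^ (j + 2)) {N : ℕ} {x : E}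
    (hx : (1 / 2 : ℝ) ^ N ≤ d x) : glue μ ζ φ U x =
      ∑ j ∈ Finset.range (N + 2), mollify μ (φ j) (fun y => ζ.toFun j y * U y) x :=
  tsum_eq_sum fun _ hj => mollify_eq_zero_of_half_pow_le h hφ hx (by simpa using hj)

theorem contDiffOn_glue (h : IsDepth Ω d) (hU : LocallyIntegrable U μ)
    (hφ : ∀ j, (φ j).rOut ≤ (1 / 2) ^ (j + 2)) : ContDiffOn ℝ ∞ (glue μ ζ φ U) Ω := by
  intro x hx
  obtain ⟨N, hN⟩ := h.exists_half_pow_lt isCompact_singleton (singleton_subset_iff.2 hx)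
  have hsum : ContDiff ℝ ∞ fun x =>
      ∑ j ∈ Finset.range (N + 2), mollify μ (φ j) (fun y => ζ.toFun j y * U y) x :=
    ContDiff.sum fun j _ => contDiff_mollify _
      (integrable_mul_of_locallyIntegrable h ζ hU j).locallyIntegrable
  refine (hsum.contDiffAt.congr_of_eventuallyEq ?_).contDiffWithinAt
  filter_upwards [h.lipschitz.continuous.continuousAt.eventually_const_lt (hN x rfl)] with y hy
    using glue_eq_sum h hφ hy.le

theorem enorm_glue_sub_le (h : IsDepth Ω d) (hφ : ∀ j, (φ j).rOut ≤ (1 / 2) ^ (j + 2)) {x : E}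
    (hx : x ∈ Ω) : ‖glue μ ζ φ U x - U x‖ₑ ≤
      ∑' j, ‖mollify μ (φ j) (fun y => ζ.toFun j y * U y) x - ζ.toFun j x * U x‖ₑ := by
  obtain ⟨N, hN⟩ := h.exists_half_pow_lt isCompact_singleton (singleton_subset_iff.2 hx)
  have hone := ζ.sum_eq_one (N + 1) x ((half_pow_succ_lt N).le.trans (hN x rfl).le)
  have hsum : glue μ ζ φ U x - U x = ∑ j ∈ Finset.range (N + 2),
      (mollify μ (φ j) (fun y => ζ.toFun j y * U y) x - ζ.toFun j x * U x) := by
    rw [glue_eq_sum h hφ (hN x rfl).le, Finset.sum_sub_distrib, ← Finset.sum_mul, hone, one_mul]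
  rw [hsum]
  exact (enorm_sum_le _ _).trans (ENNReal.sum_le_tsum _)

theorem integrableOn_glue_sub_and_setIntegral_le (h : IsDepth Ω d) (hΩ : IsOpen Ω)
    (hU : LocallyIntegrable U μ) (hφ : ∀ j, (φ j).rOut ≤ (1 / 2) ^ (j + 2)) {A : Set E}
    (hA : A ⊆ Ω) (hAm : MeasurableSet A) {b : ℕ → ℝ} {B : ℝ} (hb : HasSum b B)
    (hle : ∀ j, ∫ x in A,
      ‖mollify μ (φ j) (fun y => ζ.toFun j y * U y) x - ζ.toFun j x * U x‖ ∂μ ≤ b j) :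
    IntegrableOn (fun x => glue μ ζ φ U x - U x) A μ ∧
      ∫ x in A, |glue μ ζ φ U x - U x| ∂μ ≤ B := by
  have hpiece := integrable_mul_of_locallyIntegrable h ζ hU
  refine integrable_and_integral_norm_le_of_enorm_le_tsum
    (fun j => ((integrable_mollify _ (hpiece j)).sub (hpiece j)).integrableOn) ?_
    ((ae_restrict_iff' hAm).2 (Eventually.of_forall fun x hx => enorm_glue_sub_le h hφ (hA hx)))
    hb hle
  exact (((contDiffOn_glue h hU hφ).continuousOn.aestronglyMeasurable hΩ.measurableSet).mono_set
    hA).sub hU.aestronglyMeasurable.restrict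

theorem contDiff_smul_mollify (ζ : ShellPartition d) {η : ContDiffBump (0 : E)} {ξ : E → F}
    (hξ : LocallyIntegrable ξ μ) (j : ℕ) :
    ContDiff ℝ 1 fun y => ζ.toFun j y • mollify μ η ξ y :=
  ((ζ.contDiff j).smul (contDiff_mollify _ hξ)).of_le (by simp)

theorem isTestField_glueField (h : IsDepth Ω d) {ξ : E → F} (hξ : IsTestField Ω ξ) (N : ℕ) :
    IsTestField Ω (glueField μ ζ φ N ξ) := by
  have hts : tsupport (glueField μ ζ φ N ξ) ⊆ {x | (1 / 2 : ℝ) ^ N ≤ d x} := by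
    refine closure_minimal (fun x hx => ?_)
      (isClosed_le continuous_const h.lipschitz.continuous)
    obtain ⟨j, hj, hne⟩ := Finset.exists_ne_zero_of_sum_ne_zero hx
    exact (half_pow_le_half_pow (Finset.mem_range.1 hj)).trans
      (ζ.lower j x (subset_tsupport _ (left_ne_zero_of_smul hne))).le
  refine ⟨ContDiff.sum fun j _ =>
      contDiff_smul_mollify ζ hξ.contDiff.continuous.locallyIntegrable j,
    (h.isCompact_le _ (by positivity)).of_isClosed_subset (isClosed_tsupport _) hts,
    hts.trans (h.subset (by positivity)), fun x => ?_⟩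
  refine (norm_sum_le _ _).trans (le_trans (Finset.sum_le_sum fun j _ => ?_) (ζ.sum_le_one N x))
  rw [norm_smul, Real.norm_of_nonneg (ζ.nonneg j x)]
  exact mul_le_of_le_one_right (ζ.nonneg j x) (norm_mollify_le _ hξ.norm_le_one x)

variable (L : (E →L[ℝ] F) →L[ℝ] ℝ) {ξ : E → F}

theorem setIntegral_glue_mul_apply_fderiv (h : IsDepth Ω d) (hU : LocallyIntegrable U μ)
    (hφ : ∀ j, (φ j).rOut ≤ (1 / 2) ^ (j + 2)) (hξ : IsTestField Ω ξ) {N : ℕ}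
    (hN : ∀ x ∈ tsupport ξ, (1 / 2 : ℝ) ^ N < d x) :
    ∫ x in Ω, glue μ ζ φ U x * L (fderiv ℝ ξ x) ∂μ = ∑ j ∈ Finset.range (N + 2),
      ∫ x, mollify μ (φ j) (fun y => ζ.toFun j y * U y) x * L (fderiv ℝ ξ x) ∂μ := by
  rw [setIntegral_eq_integral_of_forall_compl_eq_zero fun x hx => by
      rw [apply_fderiv_eq_zero L fun hmem => hx (hξ.tsupport_subset hmem), mul_zero],
    ← integral_finsetSum _ fun j _ => integrable_mul_apply_fderiv L (integrable_mollify _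
      (integrable_mul_of_locallyIntegrable h ζ hU j)).locallyIntegrable hξ.contDiff
        hξ.hasCompactSupport]
  refine integral_congr_ae (Eventually.of_forall fun x => ?_)
  by_cases hx : x ∈ tsupport ξ
  · simp only [glue_eq_sum h hφ (hN x hx).le, Finset.sum_mul]
  · simp [apply_fderiv_eq_zero L hx]

theorem setIntegral_mul_apply_fderiv_glueField (h : IsDepth Ω d) (hU : LocallyIntegrable U μ)
    (hξ : IsTestField Ω ξ) (N : ℕ) :
    ∫ x in Ω, U x * L (fderiv ℝ (glueField μ ζ φ N ξ) x) ∂μ = ∑ j ∈ Finset.range N,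
      ∫ x, U x * L (fderiv ℝ (fun y => ζ.toFun j y • mollify μ (φ j) ξ y) x) ∂μ := by
  have hsm := fun j => contDiff_smul_mollify (μ := μ) (η := φ j) ζ
    hξ.contDiff.continuous.locallyIntegrable j
  rw [setIntegral_eq_integral_of_forall_compl_eq_zero fun x hx => by
      rw [apply_fderiv_eq_zero L fun hmem => hx ((isTestField_glueField h hξ N).tsupport_subset
        hmem), mul_zero],
    ← integral_finsetSum _ fun j _ => integrable_mul_apply_fderiv L hU (hsm j)
      (ζ.hasCompactSupport h j).smul_right]
  simp_rw [← Finset.mul_sum, ← map_sum]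
  congr! with x
  exact fderiv_fun_sum fun j _ => (hsm j).differentiable one_ne_zero x

variable [CompleteSpace F]

theorem integral_mollify_mul_apply_fderiv (h : IsDepth Ω d) (hU : LocallyIntegrable U μ)
    (hξ : IsTestField Ω ξ) (j : ℕ) :
    ∫ x, mollify μ (φ j) (fun y => ζ.toFun j y * U y) x * L (fderiv ℝ ξ x) ∂μ =
      (∫ x, U x * L (fderiv ℝ (fun y => ζ.toFun j y • mollify μ (φ j) ξ y) x) ∂μ) -
        ∫ x, symbol L (mollify μ (φ j) (fun y => U y • fderiv ℝ (ζ.toFun j) y) x) (ξ x) ∂μ := by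
  have hξi : Integrable ξ μ :=
    hξ.contDiff.continuous.integrable_of_hasCompactSupport hξ.hasCompactSupport
  have hDξ : Integrable (fderiv ℝ ξ) μ := (hξ.contDiff.continuous_fderiv
    one_ne_zero).integrable_of_hasCompactSupport (hξ.hasCompactSupport.fderiv ℝ)
  have hm : ContDiff ℝ ∞ (mollify μ (φ j) ξ) := contDiff_mollify _ hξi.locallyIntegrable
  have hm1 : ∀ x, ‖mollify μ (φ j) ξ x‖ ≤ 1 := norm_mollify_le _ hξ.norm_le_one
  have hleibniz : ∀ x, ζ.toFun j x * U x * mollify μ (φ j) (fun y => L (fderiv ℝ ξ y)) x =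
      U x * L (fderiv ℝ (fun y => ζ.toFun j y • mollify μ (φ j) ξ y) x) -
        symbol L (U x • fderiv ℝ (ζ.toFun j) x) (mollify μ (φ j) ξ x) := fun x => by
    rw [apply_fderiv_smul L ((ζ.contDiff j).differentiable (by simp) x)
      (hm.differentiable (by simp) x), fderiv_mollify _ hξ.contDiff hξ.hasCompactSupport,
      clm_apply_mollify L _ hDξ.locallyIntegrable, map_smul, smul_apply, smul_eq_mul]
    ring
  calc _ = ∫ x, ζ.toFun j x * U x * mollify μ (φ j) (fun y => L (fderiv ℝ ξ y)) x ∂μ :=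
        integral_bilinear_mollify_left_eq_right (φ j) (ContinuousLinearMap.mul ℝ ℝ)
          (integrable_mul_of_locallyIntegrable h ζ hU j) (L.integrable_comp hDξ)
    _ = (∫ x, U x * L (fderiv ℝ (fun y => ζ.toFun j y • mollify μ (φ j) ξ y) x) ∂μ) -
          ∫ x, symbol L (U x • fderiv ℝ (ζ.toFun j) x) (mollify μ (φ j) ξ x) ∂μ := by
        simp_rw [hleibniz]
        exact integral_sub (integrable_mul_apply_fderiv L hU
            (contDiff_smul_mollify ζ hξi.locallyIntegrable j)
            (ζ.hasCompactSupport h j).smul_right)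
          ((symbol L).integrable_of_bilin_of_bdd_right 1 (integrable_smul_fderiv h ζ hU j)
            hm.continuous.aestronglyMeasurable (Eventually.of_forall hm1))
    _ = _ := by
        rw [integral_bilinear_mollify_left_eq_right (φ j) (symbol L)
          (integrable_smul_fderiv h ζ hU j) hξi]

theorem setIntegral_glue_mul_apply_fderiv_le (h : IsDepth Ω d) (hU : LocallyIntegrable U μ)
    (hφ : ∀ j, (φ j).rOut ≤ (1 / 2) ^ (j + 2)) {b : ℕ → ℝ} {B : ℝ} (hb : HasSum b B)
    (hle : ∀ j, ∫ x, ‖mollify μ (φ j) (fun y => U y • fderiv ℝ (ζ.toFun j) y) x -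
      U x • fderiv ℝ (ζ.toFun j) x‖ ∂μ ≤ b j)
    (hvar : BddAbove (variationSet μ L Ω U)) (hξ : IsTestField Ω ξ) :
    ∫ x in Ω, glue μ ζ φ U x * L (fderiv ℝ ξ x) ∂μ ≤ variation μ L Ω U + ‖symbol L‖ * B := by
  obtain ⟨N, hN⟩ := h.exists_half_pow_lt hξ.hasCompactSupport.isCompact hξ.tsupport_subset
  set s := Finset.range (N + 2)
  let I (G : ℕ → E → E →L[ℝ] ℝ) : ℝ := ∑ j ∈ s, ∫ x, symbol L (G j x) (ξ x) ∂μ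
  set p : ℕ → E → E →L[ℝ] ℝ := fun j x => U x • fderiv ℝ (ζ.toFun j) x
  have hp : ∀ j, Integrable (p j) μ := integrable_smul_fderiv h ζ hU
  have hcancel : I p = 0 := sum_integral_symbol_smul_fderiv_eq_zero L h hU hξ
    fun x hx => (half_pow_succ_lt N).trans (hN x hx)
  have herror : I p - I (fun j => mollify μ (φ j) (p j)) ≤ ‖symbol L‖ * B := by
    rw [← Finset.sum_sub_distrib]
    calc _ ≤ ∑ j ∈ s, ‖symbol L‖ * b j := Finset.sum_le_sum fun j _ =>
          (integral_bilinear_sub_le (symbol L) (hp j) (integrable_mollify _ (hp j))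
            hξ.contDiff.continuous.aestronglyMeasurable hξ.norm_le_one).trans
            (mul_le_mul_of_nonneg_left (hle j) (norm_nonneg (symbol L)))
      _ ≤ ‖symbol L‖ * B := by
          rw [← Finset.mul_sum]
          exact mul_le_mul_of_nonneg_left (sum_le_hasSum s (fun j _ =>
            (integral_nonneg fun x => norm_nonneg _).trans (hle j)) hb) (norm_nonneg (symbol L))
  calc ∫ x in Ω, glue μ ζ φ U x * L (fderiv ℝ ξ x) ∂μ
      = ∑ j ∈ s, ∫ x, mollify μ (φ j) (fun y => ζ.toFun j y * U y) x * L (fderiv ℝ ξ x) ∂μ :=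
        setIntegral_glue_mul_apply_fderiv L h hU hφ hξ hN
    _ = (∫ x in Ω, U x * L (fderiv ℝ (glueField μ ζ φ (N + 2) ξ) x) ∂μ) -
          I fun j => mollify μ (φ j) (p j) := by
        rw [setIntegral_mul_apply_fderiv_glueField L h hU hξ, ← Finset.sum_sub_distrib]
        exact Finset.sum_congr rfl fun j _ => integral_mollify_mul_apply_fderiv L h hU hξ j
    _ ≤ variation μ L Ω U - I fun j => mollify μ (φ j) (p j) :=
        sub_le_sub_right ((isTestField_glueField h hξ _).setIntegral_le_variation hvar) _
    _ ≤ variation μ L Ω U + ‖symbol L‖ * B := by linarith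

end Gluing

section BoundaryBehaviour

theorem tendsto_setAverage_abs_sub_const {X ι : Type*} [MeasurableSpace X] {μ : Measure X}
    {l : Filter ι} {A : ι → Set X} {u v : X → ℝ} {c : ℝ}
    (hu : ∀ i, IntegrableOn (fun x => u x - c) (A i) μ)
    (hvu : ∀ i, IntegrableOn (fun x => v x - u x) (A i) μ)
    (hlim : Tendsto (fun i => ⨍ x in A i, |u x - c| ∂μ) l (𝓝 0))
    (hdiff : Tendsto (fun i => ⨍ x in A i, |v x - u x| ∂μ) l (𝓝 0)) :
    Tendsto (fun i => ⨍ x in A i, |v x - c| ∂μ) l (𝓝 0) := by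
  refine squeeze_zero (fun i => integral_nonneg fun x => abs_nonneg _) (fun i => ?_)
    (by simpa using hdiff.add hlim)
  have hu' := (hu i).abs.to_average
  have hvu' := (hvu i).abs.to_average
  calc ⨍ x in A i, |v x - c| ∂μ ≤ ⨍ x in A i, (|v x - u x| + |u x - c|) ∂μ :=
        integral_mono_of_nonneg (Eventually.of_forall fun x => abs_nonneg _) (hvu'.add hu')
          (Eventually.of_forall fun x => abs_sub_le _ _ _)
    _ = (⨍ x in A i, |v x - u x| ∂μ) + ⨍ x in A i, |u x - c| ∂μ := integral_add hvu' hu'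

variable {E : Type*} [NormedAddCommGroup E] [NormedSpace ℝ E] {Ω : Set E} {d : E → ℝ} {x : E}

theorem IsDepth.exists_ball_subset_ball_inter (h : IsDepth Ω d) (hx : x ∉ Ω) {y : E} {r s : ℝ}
    (hy : y ∈ ball x r) (hs : 0 < s) (hsy : s ≤ d y) :
    ∃ z, ball z (s / 2) ⊆ ball x r ∩ Ω := by
  have hsdist : s ≤ dist y x := by linarith [h.le_add_dist y x, h.nonpos hx]
  have hpos : 0 < dist y x := hs.trans_le hsdist
  set t : ℝ := s / 2 / dist y x
  have ht : t * dist y x = s / 2 := div_mul_cancel₀ _ hpos.ne'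
  have ht1 : t ≤ 1 := (div_le_one hpos).2 (by linarith)
  have hzy : dist (AffineMap.lineMap y x t) y = s / 2 := by
    rw [dist_lineMap_left, Real.norm_of_nonneg (by positivity), ht]
  have hzx : dist (AffineMap.lineMap y x t) x = dist y x - s / 2 := by
    rw [dist_lineMap_right, Real.norm_of_nonneg (sub_nonneg.2 ht1), sub_mul, one_mul, ht]
  refine ⟨AffineMap.lineMap y x t, subset_inter (ball_subset_ball' ?_)
    ((ball_subset_ball' ?_).trans (h.ball_subset hsy))⟩
  · linarith [mem_ball.1 hy]
  · linarith

variable [FiniteDimensional ℝ E] [MeasurableSpace E] {μ : Measure E}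

theorem measure_ball_inter_lt_top [IsFiniteMeasureOnCompacts μ] (x : E) (r : ℝ) (Ω : Set E) :
    μ (ball x r ∩ Ω) < ⊤ := by
  have : ProperSpace E := FiniteDimensional.proper ℝ E
  exact (measure_mono inter_subset_left).trans_lt measure_ball_lt_top

variable [BorelSpace E] [μ.IsAddHaarMeasure]

theorem IsDepth.mul_measureReal_ball_le (h : IsDepth Ω d) (hx : x ∉ Ω) {y : E} {r s : ℝ}
    (hy : y ∈ ball x r) (hs : 0 < s) (hsy : s ≤ d y) :
    s * μ.real (ball 0 (s / 2)) ≤ r * μ.real (ball x r ∩ Ω) := by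
  have hsr : s ≤ r := by linarith [h.le_add_dist y x, h.nonpos hx, mem_ball.1 hy]
  obtain ⟨z, hz⟩ := h.exists_ball_subset_ball_inter hx hy hs hsy
  refine mul_le_mul hsr ?_ measureReal_nonneg (hs.le.trans hsr)
  rw [← Measure.addHaar_real_ball_center μ z]
  exact measureReal_mono hz (measure_ball_inter_lt_top x r Ω).ne

theorem IsDepth.setIntegral_ball_inter_norm_le (h : IsDepth Ω d) {V : Type*}
    [NormedAddCommGroup V] {f : E → V} (hf : Integrable f μ) {s : ℝ} (hs : 0 < s)
    (hfs : ∀ y, f y ≠ 0 → s ≤ d y) {c : ℝ} (hc : 0 ≤ c)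
    (hle : ∫ y, ‖f y‖ ∂μ ≤ c * (s * μ.real (ball 0 (s / 2)))) (hx : x ∉ Ω) {r : ℝ} (hr : 0 < r) :
    ∫ y in ball x r ∩ Ω, ‖f y‖ ∂μ ≤ c * (r * μ.real (ball x r ∩ Ω)) := by
  by_cases hy : ∃ y ∈ ball x r, f y ≠ 0
  · obtain ⟨y, hy, hne⟩ := hy
    calc ∫ y in ball x r ∩ Ω, ‖f y‖ ∂μ ≤ ∫ y, ‖f y‖ ∂μ :=
          setIntegral_le_integral hf.norm (Eventually.of_forall fun y => norm_nonneg _)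
      _ ≤ c * (r * μ.real (ball x r ∩ Ω)) :=
          hle.trans (mul_le_mul_of_nonneg_left
            (h.mul_measureReal_ball_le hx hy hs (hfs y hne)) hc)
  · push Not at hy
    rw [setIntegral_eq_zero_of_forall_eq_zero fun y hmem => by rw [hy y hmem.1, norm_zero]]
    positivity

variable {ζ : ShellPartition d} {φ : ℕ → ContDiffBump (0 : E)} {U : E → ℝ}

theorem setAverage_abs_glue_sub_le (h : IsDepth Ω d) (hΩ : IsOpen Ω) (hU : LocallyIntegrable U μ)
    (hφ : ∀ j, (φ j).rOut ≤ (1 / 2) ^ (j + 2)) {b : ℕ → ℝ} {B : ℝ} (hb : HasSum b B)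
    (hb0 : ∀ j, 0 ≤ b j)
    (hle : ∀ j, ∫ x, ‖mollify μ (φ j) (fun y => ζ.toFun j y * U y) x - ζ.toFun j x * U x‖ ∂μ ≤
      b j * ((1 / 2) ^ (j + 2) * μ.real (ball 0 ((1 / 2) ^ (j + 2) / 2))))
    (hx : x ∉ Ω) {r : ℝ} (hr : 0 < r) :
    ⨍ y in ball x r ∩ Ω, |glue μ ζ φ U y - U y| ∂μ ≤ B * r := by
  have hdepth : ∀ j y, mollify μ (φ j) (fun y => ζ.toFun j y * U y) y - ζ.toFun j y * U y ≠ 0 →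
      (1 / 2 : ℝ) ^ (j + 2) ≤ d y := fun j y hne => by
    by_cases hm : mollify μ (φ j) (fun y => ζ.toFun j y * U y) y = 0
    · rw [hm, zero_sub, neg_ne_zero] at hne
      exact (half_pow_succ_lt (j + 1)).le.trans
        (ζ.lower j y (subset_tsupport _ (left_ne_zero_of_mul hne))).le
    · exact (half_pow_lt_of_mollify_ne_zero h hφ hm).le
  have hint : ∫ y in ball x r ∩ Ω, |glue μ ζ φ U y - U y| ∂μ ≤
      B * (r * μ.real (ball x r ∩ Ω)) :=
    (integrableOn_glue_sub_and_setIntegral_le h hΩ hU hφ inter_subset_right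
      (measurableSet_ball.inter hΩ.measurableSet) (hb.mul_right _) fun j =>
        h.setIntegral_ball_inter_norm_le ((integrable_mollify _
          (integrable_mul_of_locallyIntegrable h ζ hU j)).sub
            (integrable_mul_of_locallyIntegrable h ζ hU j)) (by positivity) (hdepth j) (hb0 j)
          (hle j) hx hr).2
  have hB : 0 ≤ B := hb.nonneg hb0
  rw [setAverage_eq, smul_eq_mul]
  exact inv_mul_le_of_le_mul₀ measureReal_nonneg (by positivity) (hint.trans_eq (by ring))

end BoundaryBehaviour

section Approximation

theorem variationSet_congr {E F : Type*} [NormedAddCommGroup E] [NormedSpace ℝ E]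
    [MeasurableSpace E] {μ : Measure E} {Ω : Set E} [NormedAddCommGroup F] [NormedSpace ℝ F]
    (L : (E →L[ℝ] F) →L[ℝ] ℝ) (hΩ : MeasurableSet Ω) {u v : E → ℝ} (huv : EqOn u v Ω) :
    variationSet μ L Ω u = variationSet μ L Ω v := by
  have hint : ∀ ξ : E → F, ∫ x in Ω, u x * L (fderiv ℝ ξ x) ∂μ =
      ∫ x in Ω, v x * L (fderiv ℝ ξ x) ∂μ := fun ξ =>
    setIntegral_congr_fun hΩ fun x hx => by simp only [huv hx]
  simp only [variationSet, hint]

variable {E : Type*} [NormedAddCommGroup E] [NormedSpace ℝ E] [FiniteDimensional ℝ E]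
  [MeasurableSpace E] [BorelSpace E] {μ : Measure E} [μ.IsAddHaarMeasure] {Ω : Set E}

theorem exists_mollifiers_sub_le {d : E → ℝ} (h : IsDepth Ω d) (ζ : ShellPartition d) {U : E → ℝ}
    (hU : LocallyIntegrable U μ) {ρ a b : ℕ → ℝ} (hρ : ∀ j, 0 < ρ j) (ha : ∀ j, 0 < a j)
    (hb : ∀ j, 0 < b j) : ∃ φ : ℕ → ContDiffBump (0 : E), (∀ j, (φ j).rOut ≤ ρ j) ∧
      (∀ j, ∫ x, ‖mollify μ (φ j) (fun y => ζ.toFun j y * U y) x - ζ.toFun j x * U x‖ ∂μ ≤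
        min (a j) (b j)) ∧
      ∀ j, ∫ x, ‖mollify μ (φ j) (fun y => U y • fderiv ℝ (ζ.toFun j) y) x -
        U x • fderiv ℝ (ζ.toFun j) x‖ ∂μ ≤ b j := by
  choose φ hφ hval hder using fun j => exists_mollify_sub_le
    (integrable_mul_of_locallyIntegrable h ζ hU j) (integrable_smul_fderiv h ζ hU j) (hρ j)
    (lt_min (ha j) (hb j))
  exact ⟨φ, hφ, hval, fun j => (hder j).trans (min_le_right _ _)⟩

theorem exists_contDiffOn_approx (hΩ : IsOpen Ω) {u : E → ℝ} (hu : IntegrableOn u Ω μ) {ε : ℝ}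
    (hε : 0 < ε) : ∃ v : E → ℝ, ContDiffOn ℝ ∞ v Ω ∧ IntegrableOn (fun x => v x - u x) Ω μ ∧
      ∫ x in Ω, |v x - u x| ∂μ ≤ ε ∧
      (∀ x ∉ Ω, ∀ r > 0, ⨍ y in ball x r ∩ Ω, |v y - u y| ∂μ ≤ ε * r) ∧
      ∀ {F : Type*} [NormedAddCommGroup F] [NormedSpace ℝ F] [CompleteSpace F]
        (L : (E →L[ℝ] F) →L[ℝ] ℝ), BddAbove (variationSet μ L Ω u) → ∀ ξ : E → F,
        IsTestField Ω ξ → ∫ x in Ω, v x * L (fderiv ℝ ξ x) ∂μ ≤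
          variation μ L Ω u + ‖symbol L‖ * ε := by
  have : ProperSpace E := FiniteDimensional.proper ℝ E
  obtain ⟨d, h⟩ := exists_isDepth hΩ
  obtain ⟨ζ⟩ := nonempty_shellPartition h
  set U := Ω.indicator u
  have hUu : ∀ x ∈ Ω, U x = u x := fun x hx => indicator_of_mem hx u
  have hU : LocallyIntegrable U μ :=
    ((integrable_indicator_iff hΩ.measurableSet).2 hu).locallyIntegrable
  have hball : ∀ j : ℕ, 0 < (1 / 2 : ℝ) ^ (j + 2) * μ.real (ball 0 ((1 / 2) ^ (j + 2) / 2)) :=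
    fun j => mul_pos (by positivity)
      (ENNReal.toReal_pos (measure_ball_pos μ _ (by positivity)).ne' measure_ball_lt_top.ne)
  have hb : HasSum (fun j => ε / 2 / 2 ^ j) ε := hasSum_geometric_two' ε
  have hb0 : ∀ j : ℕ, 0 < ε / 2 / 2 ^ j := fun j => by positivity
  obtain ⟨φ, hφ, hval, hder⟩ := exists_mollifiers_sub_le (μ := μ) h ζ hU
    (ρ := fun j => (1 / 2) ^ (j + 2)) (fun j => by positivity)
    (fun j => mul_pos (hb0 j) (hball j)) hb0
  have hpiece := integrable_mul_of_locallyIntegrable h ζ hU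
  obtain ⟨hint, hL1⟩ := integrableOn_glue_sub_and_setIntegral_le h hΩ hU hφ subset_rfl
    hΩ.measurableSet hb fun j => (setIntegral_le_integral
      ((integrable_mollify _ (hpiece j)).sub (hpiece j)).norm
      (Eventually.of_forall fun x => norm_nonneg _)).trans ((hval j).trans (min_le_right _ _))
  have hdiff : EqOn (fun x => glue μ ζ φ U x - U x) (fun x => glue μ ζ φ U x - u x) Ω :=
    fun x hx => by simp only [hUu x hx]
  refine ⟨glue μ ζ φ U, contDiffOn_glue h hU hφ, hint.congr_fun hdiff hΩ.measurableSet,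
    (setIntegral_congr_fun hΩ.measurableSet fun x hx => congrArg abs (hdiff hx)).symm.trans_le hL1,
    fun x hx r hr => ?_, fun L hvar ξ hξ => ?_⟩
  · rw [← setAverage_congr_fun (measurableSet_ball.inter hΩ.measurableSet)
      (Eventually.of_forall fun y hy => congrArg abs (hdiff hy.2))]
    exact setAverage_abs_glue_sub_le h hΩ hU hφ hb (fun j => (hb0 j).le)
      (fun j => (hval j).trans (min_le_left _ _)) hx hr
  · have hset := variationSet_congr (μ := μ) L hΩ.measurableSet hUu
    rw [← hset] at hvar
    rw [variation, ← hset]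
    exact setIntegral_glue_mul_apply_fderiv_le L h hU hφ hb hder hvar hξ

end Approximation

theorem exists_seq_contDiffOn_tendsto_variation {E : Type*} [NormedAddCommGroup E] [NormedSpace ℝ E]
    [FiniteDimensional ℝ E] [MeasurableSpace E] [BorelSpace E] (μ : Measure E) [μ.IsAddHaarMeasure]
    {Ω : Set E} (hΩ : IsOpen Ω) {u : E → ℝ} (hu : IntegrableOn u Ω μ) :
    ∃ v : ℕ → E → ℝ, (∀ n, ContDiffOn ℝ ∞ (v n) Ω) ∧ (∀ n, IntegrableOn (v n) Ω μ) ∧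
      Tendsto (fun n => ∫ x in Ω, |v n x - u x| ∂μ) atTop (𝓝 0) ∧
      (∀ x ∉ Ω, ∀ c, Tendsto (fun r => ⨍ y in ball x r ∩ Ω, |u y - c| ∂μ) (𝓝[>] 0) (𝓝 0) →
        ∀ n, Tendsto (fun r => ⨍ y in ball x r ∩ Ω, |v n y - c| ∂μ) (𝓝[>] 0) (𝓝 0)) ∧
      ∀ {F : Type*} [NormedAddCommGroup F] [InnerProductSpace ℝ F] [CompleteSpace F]
        (L : (E →L[ℝ] F) →L[ℝ] ℝ), BddAbove (variationSet μ L Ω u) →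
        (∀ n, IntegrableOn (fun x => ‖symbol L (fderivWithin ℝ (v n) Ω x)‖) Ω μ) ∧
          Tendsto (fun n => ∫ x in Ω, ‖symbol L (fderivWithin ℝ (v n) Ω x)‖ ∂μ) atTop
            (𝓝 (variation μ L Ω u)) := by
  choose v hv hdiff hL1 htrace htest using fun n : ℕ =>
    exists_contDiffOn_approx hΩ hu (Nat.one_div_pos_of_nat (α := ℝ) (n := n))
  have hvint : ∀ n, IntegrableOn (v n) Ω μ := fun n =>
    ((hdiff n).add hu).congr (Eventually.of_forall fun x => sub_add_cancel _ _)
  have hlim : Tendsto (fun n => ∫ x in Ω, |v n x - u x| ∂μ) atTop (𝓝 0) :=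
    squeeze_zero (fun n => integral_nonneg fun x => abs_nonneg _) hL1
      tendsto_one_div_add_atTop_nhds_zero_nat
  refine ⟨v, hv, hvint, hlim, fun x hx c hc n => ?_, fun L hvar =>
    tendsto_integral_norm_symbol_of_testField_le hΩ hu
      (fun n => (hv n).of_le ENat.LEInfty.out) hvint hlim
      (mul_zero ‖symbol L‖ ▸ tendsto_one_div_add_atTop_nhds_zero_nat.const_mul ‖symbol L‖)
      fun n ξ hξ => htest n L hvar ξ hξ⟩
  have hvanish : Tendsto (fun r => ⨍ y in ball x r ∩ Ω, |v n y - u y| ∂μ) (𝓝[>] 0) (𝓝 0) := by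
    refine squeeze_zero' (Eventually.of_forall fun r => integral_nonneg fun y => abs_nonneg _)
      (eventually_nhdsWithin_of_forall fun r hr => htrace n x hx r hr) ?_
    exact tendsto_nhdsWithin_of_tendsto_nhds ((continuous_const_mul _).tendsto' _ _ (mul_zero _))
  exact tendsto_setAverage_abs_sub_const
    (fun r => (hu.mono_set inter_subset_right).sub
      (integrableOn_const (measure_ball_inter_lt_top x r Ω).ne))
    (fun r => (hdiff n).mono_set inter_subset_right) hc hvanish

section PlaneDivergence

/-- The divergence on the plane, as a functional of the derivative of the field. -/
def divergenceCLM : (E2 →L[ℝ] E2) →L[ℝ] ℝ :=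
  ∑ i, EuclideanSpace.proj i ∘L ContinuousLinearMap.apply ℝ E2 (EuclideanSpace.single i 1)

theorem divergenceCLM_fderiv (ξ : E2 → E2) (x : E2) :
    divergenceCLM (fderiv ℝ ξ x) = divg ξ x := by
  simp [divergenceCLM, divg]

theorem norm_symbol_divergenceCLM (p : E2 →L[ℝ] ℝ) : ‖symbol divergenceCLM p‖ = ‖p‖ := by
  congr 1
  ext w
  conv_rhs => rw [← (EuclideanSpace.basisFun (Fin 2) ℝ).sum_repr w]
  simp [symbol_apply, divergenceCLM, mul_comm]

theorem norm_symbol_apply {E : Type*} [NormedAddCommGroup E] [NormedSpace ℝ E] (e : E)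
    (p : E →L[ℝ] ℝ) : ‖symbol (ContinuousLinearMap.apply ℝ ℝ e) p‖ = |p e| := by
  have hsymbol : symbol (ContinuousLinearMap.apply ℝ ℝ e) p = p e • ContinuousLinearMap.id ℝ ℝ := by
    ext
    simp [symbol_apply]
  rw [hsymbol, norm_smul, ContinuousLinearMap.norm_id, mul_one, Real.norm_eq_abs]

theorem varSet_eq_variationSet (Ω : Set E2) (u : E2 → ℝ) :
    varSet Ω u = variationSet volume divergenceCLM Ω u := by
  ext a
  simp only [varSet, variationSet, divergenceCLM_fderiv]
  exact ⟨fun ⟨ξ, h1, h2, h3, h4, h5⟩ => ⟨ξ, ⟨h1, h2, h3, h4⟩, h5⟩,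
    fun ⟨ξ, ⟨h1, h2, h3, h4⟩, h5⟩ => ⟨ξ, h1, h2, h3, h4, h5⟩⟩

theorem dirVarSet_eq_variationSet (Ω : Set E2) (u : E2 → ℝ) (k : Fin 2) : dirVarSet Ω u k =
    variationSet volume (ContinuousLinearMap.apply ℝ ℝ (EuclideanSpace.single k 1)) Ω u := by
  ext a
  exact ⟨fun ⟨ξ, h1, h2, h3, h4, h5⟩ => ⟨ξ, ⟨h1, h2, h3, h4⟩, h5⟩,
    fun ⟨ξ, ⟨h1, h2, h3, h4⟩, h5⟩ => ⟨ξ, h1, h2, h3, h4, h5⟩⟩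

theorem dirVarSet_subset_varSet (Ω : Set E2) (u : E2 → ℝ) (k : Fin 2) :
    dirVarSet Ω u k ⊆ varSet Ω u := by
  rintro _ ⟨ξ, hξ, hc, hs, h1, rfl⟩
  have hdiv : ∀ x, divg (fun x => ξ x • EuclideanSpace.single k 1) x =
      fderiv ℝ ξ x (EuclideanSpace.single k 1) := fun x => by
    simp [divg, fderiv_smul_const (hξ.differentiable one_ne_zero x)]
  refine ⟨fun x => ξ x • EuclideanSpace.single k 1, hξ.smul contDiff_const, hc.smul_right,
    (closure_mono (Function.support_smul_subset_left _ _)).trans hs, fun x => ?_, ?_⟩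
  · simpa [norm_smul] using h1 x
  · simp only [hdiv]

end PlaneDivergence

theorem stmt16_general {Ω : Set E2} (hopen : IsOpen Ω) {u : E2 → ℝ} (hu : IsBVOn Ω u) :
    ∃ un : ℕ → E2 → ℝ,
      (∀ n, ContDiffOn ℝ ∞ (un n) Ω) ∧
      (∀ n, IntegrableOn (un n) Ω volume) ∧
      (∀ n, IntegrableOn (fun x => ‖fderivWithin ℝ (un n) Ω x‖) Ω volume) ∧
      Tendsto (fun n => ∫ x in Ω, |un n x - u x|) atTop (𝓝 0) ∧
      Tendsto (fun n => ∫ x in Ω, ‖fderivWithin ℝ (un n) Ω x‖) atTop (𝓝 (totalVar Ω u)) ∧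
      (∀ h : E2 → ℝ, HasTraceOn Ω ((μH[1]).restrict (frontier Ω)) u h →
        ∀ n, HasTraceOn Ω ((μH[1]).restrict (frontier Ω)) (un n) h) ∧
      ∀ k : Fin 2,
        Tendsto (fun n => ∫ x in Ω, |fderivWithin ℝ (un n) Ω x (EuclideanSpace.single k 1)|)
          atTop (𝓝 (dirVar Ω u k)) := by
  obtain ⟨v, hv, hvint, hL1, htrace, hvar⟩ :=
    exists_seq_contDiffOn_tendsto_variation volume hopen hu.1
  have hbv : BddAbove (variationSet volume divergenceCLM Ω u) :=
    varSet_eq_variationSet Ω u ▸ hu.2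
  have htotal := hvar divergenceCLM hbv
  simp only [norm_symbol_divergenceCLM, variation, ← varSet_eq_variationSet] at htotal
  refine ⟨v, hv, hvint, htotal.1, hL1, htotal.2, fun h hh n => ?_, fun k => ?_⟩
  · filter_upwards [hh, ae_restrict_mem isClosed_frontier.measurableSet] with x hx hxΩ
    exact htrace x (hopen.frontier_eq ▸ hxΩ).2 (h x) hx n
  · have hdir := (hvar _ (dirVarSet_eq_variationSet Ω u k ▸
      hu.2.mono (dirVarSet_subset_varSet Ω u k))).2
    simpa only [norm_symbol_apply, dirVar, variation, ← dirVarSet_eq_variationSet] using hdir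

/-- smoothing preserving the trace: if `Ω ⊆ ℝ²` is a bounded Lipschitz
open set and `u ∈ BV(Ω)`, there is a sequence `(u_n) ⊆ C¹(Ω) ∩ W^{1,1}(Ω)` with
`u_n → u` in `L¹`, `∫_Ω |∇u_n| → ∫_Ω |Du|`, the same trace as `u` for every `n`, and
`∫_Ω |∂_k u_n| → ∫_Ω |D_k u|` for `k ∈ {1,2}`. -/
theorem stmt16 (Ω : Set E2) (hopen : IsOpen Ω) (hbdd : Bornology.IsBounded Ω)
    (hLip : IsLipschitzSet Ω) (u : E2 → ℝ) (hu : IsBVOn Ω u) :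
    ∃ un : ℕ → E2 → ℝ,
      (∀ n, ContDiffOn ℝ 1 (un n) Ω) ∧
      (∀ n, IntegrableOn (un n) Ω volume) ∧
      (∀ n, IntegrableOn (fun x => ‖fderivWithin ℝ (un n) Ω x‖) Ω volume) ∧
      Tendsto (fun n => ∫ x in Ω, |un n x - u x|) atTop (𝓝 0) ∧
      Tendsto (fun n => ∫ x in Ω, ‖fderivWithin ℝ (un n) Ω x‖) atTop (𝓝 (totalVar Ω u)) ∧
      (∀ h : E2 → ℝ, HasTraceOn Ω ((μH[1]).restrict (frontier Ω)) u h →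
        ∀ n, HasTraceOn Ω ((μH[1]).restrict (frontier Ω)) (un n) h) ∧
      ∀ k : Fin 2,
        Tendsto (fun n => ∫ x in Ω, |fderivWithin ℝ (un n) Ω x (EuclideanSpace.single k 1)|)
          atTop (𝓝 (dirVar Ω u k)) := by
  obtain ⟨v, hv, hrest⟩ := stmt16_general hopen hu
  exact ⟨v, fun n => (hv n).of_le (by simp), hrest⟩
end
end

section
/- Let 𝔻 be the open unit disc in ℝ², let M ⊂ 𝕊¹ ∩ {x < 0} be an arc with endpoints (x₀, −y₀) and (x₀, y₀) where x₀ ≤ 0 and y₀ > 0, and let 𝒞 be the chord of M (so ℋ¹(𝒞) = 2y₀). Then the function u₀ = 1_{{(x,y): x < x₀}} restricted to 𝔻 belongs to BV(𝔻), has trace 1_M on 𝕊¹, satisfies ∫_𝔻 |Du₀| = 2y₀, and is a function of least gradient: ∫_𝔻 |Du₀| = inf { ∫_𝔻 |Du| : u ∈ BV(𝔻), tr_{𝕊¹} u = 1_M }. -/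
noncomputable section
open MeasureTheory Filter Set Topology Metric

/-!
Green's formula turns `∫_Ω u₀ div ξ` into the integral of the horizontal component of `ξ` over the
chord, so the total variation of `u₀` is at most the length of the chord.

Conversely, let `u` have the same trace. Almost every horizontal line meeting the chord runs from a
boundary point where the trace is `1` to one where it is `0`. Testing `u` with horizontal fields
supported in the strip `|t - y| < r`, whose cutoffs in `x` vary only at distance comparable to `r`
from the two boundary points, shows that the horizontal variation of `u` in the strip is at least
`(1 - o(1)) 2r`. Hence the increasing function sending `t` to the horizontal variation of `u` below
height `t` has derivative at least `1` almost everywhere on the chord, and by Lebesgue's theorem its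
total increase is at least the length of the chord.
-/

/-- Cartesian coordinates on the plane, used to pass between `E2` and iterated integrals
over `ℝ × ℝ`. -/
def cartesian : (ℝ × ℝ) ≃L[ℝ] E2 :=
  (ContinuousLinearEquiv.finTwoArrow ℝ ℝ).symm.trans (EuclideanSpace.equiv (Fin 2) ℝ).symm

@[simp] theorem cartesian_apply_zero (z : ℝ × ℝ) : cartesian z 0 = z.1 := rfl

@[simp] theorem cartesian_apply_one (z : ℝ × ℝ) : cartesian z 1 = z.2 := rfl

theorem cartesian_coords (p : E2) : cartesian (p 0, p 1) = p := by
  ext i; fin_cases i <;> rfl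

theorem cartesian_one_zero : cartesian (1, 0) = EuclideanSpace.single 0 1 := by
  ext i; fin_cases i <;> simp

theorem cartesian_zero_one : cartesian (0, 1) = EuclideanSpace.single 1 1 := by
  ext i; fin_cases i <;> simp

theorem measurableEmbedding_cartesian : MeasurableEmbedding cartesian :=
  cartesian.toHomeomorph.measurableEmbedding

theorem measurePreserving_cartesian : MeasurePreserving cartesian volume volume :=
  (PiLp.volume_preserving_toLp (Fin 2)).comp (volume_preserving_finTwoArrow ℝ).symm

theorem dist_cartesian (z w : ℝ × ℝ) :
    dist (cartesian z) (cartesian w) = √((z.1 - w.1) ^ 2 + (z.2 - w.2) ^ 2) := by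
  simp [EuclideanSpace.dist_eq, Fin.sum_univ_two, Real.dist_eq, sq_abs]

theorem isometry_cartesian_left (y : ℝ) : Isometry fun x => cartesian (x, y) :=
  Isometry.of_dist_eq fun x x' => by simp [dist_cartesian, Real.sqrt_sq_eq_abs, Real.dist_eq]

theorem isometry_cartesian_right (x : ℝ) : Isometry fun y => cartesian (x, y) :=
  Isometry.of_dist_eq fun y y' => by simp [dist_cartesian, Real.sqrt_sq_eq_abs, Real.dist_eq]

theorem dist_cartesian_le (z w : ℝ × ℝ) :
    dist (cartesian z) (cartesian w) ≤ |z.1 - w.1| + |z.2 - w.2| := by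
  rw [dist_cartesian]
  refine Real.sqrt_le_iff.2 ⟨by positivity, ?_⟩
  rw [← sq_abs (z.1 - w.1), ← sq_abs (z.2 - w.2)]
  nlinarith [abs_nonneg (z.1 - w.1), abs_nonneg (z.2 - w.2)]

theorem abs_coord_le_norm (p : E2) (i : Fin 2) : |p i| ≤ ‖p‖ := PiLp.norm_apply_le p i

/-- The open half-plane to the left of the vertical line `x = a`. -/
def leftHalfPlane (a : ℝ) : Set E2 := {p | p 0 < a}

theorem isOpen_leftHalfPlane (a : ℝ) : IsOpen (leftHalfPlane a) :=
  isOpen_lt (by fun_prop) continuous_const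

/-- The chord cut out of `Ω` by the vertical line `x = a`, parametrised by its second
coordinate; for convex `Ω` its Lebesgue measure is the length of the chord. -/
def verticalSlice (Ω : Set E2) (a : ℝ) : Set ℝ := (fun y => cartesian (a, y)) ⁻¹' Ω

theorem volume_verticalSlice_ne_top {Ω : Set E2} (hΩ : Bornology.IsBounded Ω) (a : ℝ) :
    volume (verticalSlice Ω a) ≠ ⊤ :=
  ((isometry_cartesian_right a).antilipschitz.isBounded_preimage hΩ).measure_lt_top.ne

/-! ### Green's formula in a half-plane -/

theorem support_divg_subset (ξ : E2 → E2) : Function.support (divg ξ) ⊆ tsupport ξ := by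
  refine fun p hp => support_fderiv_subset ℝ fun h => hp ?_
  simp [divg, h]

theorem continuous_divg {ξ : E2 → E2} (hξ : ContDiff ℝ 1 ξ) : Continuous (divg ξ) := by
  have := hξ.continuous_fderiv one_ne_zero
  unfold divg
  fun_prop

theorem hasFDerivAt_comp_cartesian_apply {ξ : E2 → E2} (hξ : Differentiable ℝ ξ) (i : Fin 2)
    (z : ℝ × ℝ) :
    HasFDerivAt (fun z => ξ (cartesian z) i)
      ((EuclideanSpace.proj (𝕜 := ℝ) i : E2 →L[ℝ] ℝ) ∘L fderiv ℝ ξ (cartesian z) ∘L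
        (cartesian : ℝ × ℝ →L[ℝ] E2)) z :=
  (EuclideanSpace.proj (𝕜 := ℝ) i : E2 →L[ℝ] ℝ).hasFDerivAt.comp z
    ((hξ _).hasFDerivAt.comp z cartesian.hasFDerivAt)

theorem setIntegral_Icc_divg {ξ : E2 → E2} (hξ : ContDiff ℝ 1 ξ) {a b : ℝ × ℝ} (hab : a ≤ b) :
    ∫ z in Icc a b, divg ξ (cartesian z) =
      (((∫ x in a.1..b.1, ξ (cartesian (x, b.2)) 1) - ∫ x in a.1..b.1, ξ (cartesian (x, a.2)) 1) +
        ∫ y in a.2..b.2, ξ (cartesian (b.1, y)) 0) - ∫ y in a.2..b.2, ξ (cartesian (a.1, y)) 0 := by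
  have hdiff := hasFDerivAt_comp_cartesian_apply (hξ.differentiable one_ne_zero)
  have hcont : Continuous fun z => divg ξ (cartesian z) :=
    (continuous_divg hξ).comp cartesian.continuous
  have hdiv : ∀ z, divg ξ (cartesian z) =
      fderiv ℝ ξ (cartesian z) (cartesian (1, 0)) 0 +
        fderiv ℝ ξ (cartesian z) (cartesian (0, 1)) 1 := fun z => by
    rw [divg, Fin.sum_univ_two, cartesian_one_zero, cartesian_zero_one]
  simp_rw [hdiv] at hcont ⊢
  exact integral_divergence_prod_Icc_of_hasFDerivAt_of_le _ _ _ _ a b hab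
    (continuous_iff_continuousAt.2 fun z => (hdiff 0 z).continuousAt).continuousOn
    (continuous_iff_continuousAt.2 fun z => (hdiff 1 z).continuousAt).continuousOn
    (fun z _ => hdiff 0 z) (fun z _ => hdiff 1 z) hcont.integrableOn_Icc

theorem exists_forall_cartesian_notMem_of_isBounded {s : Set E2} (hs : Bornology.IsBounded s)
    (r : ℝ) : ∃ R > r, ∀ z : ℝ × ℝ, R ≤ |z.1| ∨ R ≤ |z.2| → cartesian z ∉ s := by
  obtain ⟨R, hR, hsub⟩ := hs.subset_ball_lt r 0
  refine ⟨R, hR, fun z hz hmem => ?_⟩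
  have hnorm := mem_ball_zero_iff.1 (hsub hmem)
  have h0 : |z.1| ≤ _ := abs_coord_le_norm (cartesian z) 0
  have h1 : |z.2| ≤ _ := abs_coord_le_norm (cartesian z) 1
  rcases hz with hz | hz <;> linarith

theorem setIntegral_leftHalfPlane_divg {ξ : E2 → E2} (hξ : ContDiff ℝ 1 ξ)
    (hc : HasCompactSupport ξ) (a : ℝ) :
    ∫ p in leftHalfPlane a, divg ξ p = ∫ y, ξ (cartesian (a, y)) 0 := by
  obtain ⟨R, haR, hfar⟩ := exists_forall_cartesian_notMem_of_isBounded hc.isBounded |a|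
  have hξ0 : ∀ z : ℝ × ℝ, R ≤ |z.1| ∨ R ≤ |z.2| → ξ (cartesian z) = 0 := fun z hz =>
    image_eq_zero_of_notMem_tsupport (hfar z hz)
  have hbox : Icc ((-R, -R) : ℝ × ℝ) (a, R) ⊆ Iic a ×ˢ univ := fun z hz => ⟨hz.2.1, trivial⟩
  calc ∫ p in leftHalfPlane a, divg ξ p
      = ∫ z in Iio a ×ˢ (univ : Set ℝ), divg ξ (cartesian z) := by
        rw [← measurePreserving_cartesian.setIntegral_preimage_emb measurableEmbedding_cartesian]
        congr 2; ext z; simp [leftHalfPlane]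
    _ = ∫ z in Iic a ×ˢ (univ : Set ℝ), divg ξ (cartesian z) :=
        setIntegral_congr_set (Measure.set_prod_ae_eq Iio_ae_eq_Iic ae_eq_rfl)
    _ = ∫ z in Icc (-R, -R) (a, R), divg ξ (cartesian z) := by
        refine setIntegral_eq_of_subset_of_forall_sdiff_eq_zero
          (measurableSet_Iic.prod .univ) hbox fun z hz => ?_
        by_contra hne
        refine hfar z ?_ (support_divg_subset ξ hne)
        by_contra! hnear
        exact hz.2 ⟨⟨(abs_lt.1 hnear.1).1.le, (abs_lt.1 hnear.2).1.le⟩,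
          ⟨hz.1.1, (abs_lt.1 hnear.2).2.le⟩⟩
    _ = ∫ y in (-R)..R, ξ (cartesian (a, y)) 0 := by
        have hle : ((-R, -R) : ℝ × ℝ) ≤ (a, R) :=
          ⟨(abs_lt.1 haR).1.le, by dsimp only; linarith [abs_nonneg a]⟩
        have hR' : R ≤ |R| := le_abs_self R
        rw [setIntegral_Icc_divg hξ hle]
        simp [hξ0, hR']
    _ = ∫ y, ξ (cartesian (a, y)) 0 := by
        refine intervalIntegral.integral_eq_integral_of_support_subset fun y hy => ?_
        by_contra hmem
        have h0 : ξ (cartesian (a, y)) = 0 := hξ0 (a, y) <| .inr <| le_of_not_gt fun h =>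
          hmem ⟨(abs_lt.1 h).1, (abs_lt.1 h).2.le⟩
        exact hy (by simp [h0])

theorem le_volume_verticalSlice_of_mem_varSet {Ω : Set E2} {a v : ℝ}
    (hfin : volume (verticalSlice Ω a) ≠ ⊤) (hv : v ∈ varSet Ω ((leftHalfPlane a).indicator 1)) :
    v ≤ volume.real (verticalSlice Ω a) := by
  obtain ⟨ξ, hξ, hc, hsupp, hnorm, rfl⟩ := hv
  have hgreen : ∫ p in Ω, (leftHalfPlane a).indicator 1 p * divg ξ p
      = ∫ y, ξ (cartesian (a, y)) 0 := by
    rw [← setIntegral_leftHalfPlane_divg hξ hc,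
      ← integral_indicator (isOpen_leftHalfPlane a).measurableSet,
      setIntegral_eq_integral_of_forall_compl_eq_zero]
    · congr with p
      by_cases hp : p ∈ leftHalfPlane a <;> simp [hp]
    · intro p hp
      rw [Function.notMem_support.1 fun h => hp (hsupp (support_divg_subset ξ h)), mul_zero]
  have hslice : ∀ y ∉ verticalSlice Ω a, ξ (cartesian (a, y)) 0 = 0 := fun y hy => by
    simp [image_eq_zero_of_notMem_tsupport fun h => hy (hsupp h)]
  rw [hgreen, ← setIntegral_eq_integral_of_forall_compl_eq_zero hslice]
  have hbound : ∀ y, ‖ξ (cartesian (a, y)) 0‖ ≤ 1 := fun y =>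
    (abs_coord_le_norm _ 0).trans (hnorm _)
  simpa using (le_abs_self _).trans
    (norm_setIntegral_le_of_norm_le_const hfin.lt_top fun y _ => hbound y)

/-! ### Chords of convex domains -/

theorem smul_cartesian_add_smul_cartesian (α β : ℝ) (z w : ℝ × ℝ) :
    α • cartesian z + β • cartesian w =
      cartesian (α * z.1 + β * w.1, α * z.2 + β * w.2) := by
  rw [← map_smul, ← map_smul, ← map_add]; rfl

theorem convex_verticalSlice {Ω : Set E2} (hΩ : Convex ℝ Ω) (a : ℝ) :
    Convex ℝ (verticalSlice Ω a) := fun y hy z hz α β hα hβ hαβ => by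
  have h := hΩ hy hz hα hβ hαβ
  rwa [smul_cartesian_add_smul_cartesian, ← add_mul, hαβ, one_mul] at h

theorem isOpen_verticalSlice {Ω : Set E2} (hΩ : IsOpen Ω) (a : ℝ) : IsOpen (verticalSlice Ω a) :=
  hΩ.preimage (isometry_cartesian_right a).continuous

theorem frontier_inter_vertical_subset_image {Ω : Set E2} (hconv : Convex ℝ Ω) (hopen : IsOpen Ω)
    {a : ℝ} (hslice : (verticalSlice Ω a).Nonempty) :
    frontier Ω ∩ {p | p 0 = a} ⊆ (fun y => cartesian (a, y)) '' frontier (verticalSlice Ω a) := by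
  rintro p ⟨hp, rfl⟩
  refine ⟨p 1, ?_, cartesian_coords p⟩
  rw [hopen.frontier_eq] at hp
  rw [(isOpen_verticalSlice hopen _).frontier_eq]
  refine ⟨?_, fun h => hp.2 (cartesian_coords p ▸ h)⟩
  have hcl : cartesian (p 0, p 1) ∈ closure Ω := (cartesian_coords p).symm ▸ hp.1
  obtain ⟨y, hy⟩ := hslice
  have hseg : openSegment ℝ y (p 1) ⊆ verticalSlice Ω (p 0) := by
    rintro _ ⟨α, β, hα, hβ, hαβ, rfl⟩
    have h := hconv.combo_interior_closure_mem_interior (hopen.interior_eq.symm ▸ hy) hcl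
      hα hβ.le hαβ
    rwa [smul_cartesian_add_smul_cartesian, ← add_mul, hαβ, one_mul,
      hopen.interior_eq] at h
  exact closure_mono hseg (segment_subset_closure_openSegment (right_mem_segment ℝ y (p 1)))

theorem hausdorffMeasure_frontier_inter_vertical {Ω : Set E2} (hconv : Convex ℝ Ω)
    (hopen : IsOpen Ω) {a : ℝ} (hslice : (verticalSlice Ω a).Nonempty) :
    μH[1] (frontier Ω ∩ {p | p 0 = a}) = 0 := by
  refine measure_mono_null (frontier_inter_vertical_subset_image hconv hopen hslice) ?_
  rw [(isometry_cartesian_right a).hausdorffMeasure_image (.inl zero_le_one),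
    hausdorffMeasure_real, (convex_verticalSlice hconv a).addHaar_frontier volume]

theorem tendsto_setAverage_abs_sub_of_eventually_eq {u : E2 → ℝ} {p : E2} {c : ℝ}
    (h : ∀ᶠ q in 𝓝 p, u q = c) (Ω : Set E2) :
    Tendsto (fun r : ℝ => ⨍ q in ball p r ∩ Ω, |u q - c|) (𝓝[>] 0) (𝓝 0) := by
  obtain ⟨ρ, hρ, hball⟩ := Metric.eventually_nhds_iff_ball.1 h
  refine tendsto_const_nhds.congr' ?_
  filter_upwards [Ioo_mem_nhdsGT hρ] with r hr
  rw [setAverage_eq, setIntegral_eq_zero_of_forall_eq_zero, smul_zero]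
  intro q hq
  simp [hball q (ball_subset_ball hr.2.le hq.1)]

theorem hasTraceOn_indicator_leftHalfPlane {Ω : Set E2} (hconv : Convex ℝ Ω) (hopen : IsOpen Ω)
    {a : ℝ} (hslice : (verticalSlice Ω a).Nonempty) :
    HasTraceOn Ω (μH[1].restrict (frontier Ω)) ((leftHalfPlane a).indicator 1)
      ((frontier Ω ∩ leftHalfPlane a).indicator 1) := by
  have hoff := measure_eq_zero_iff_ae_notMem.1
    (hausdorffMeasure_frontier_inter_vertical hconv hopen hslice)
  rw [HasTraceOn, ae_restrict_iff' isClosed_frontier.measurableSet]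
  filter_upwards [hoff] with p hp hpΩ
  refine tendsto_setAverage_abs_sub_of_eventually_eq ?_ Ω
  have hcont : ContinuousAt (fun q : E2 => q 0) p := by fun_prop
  rcases lt_trichotomy (p 0) a with hlt | heq | hgt
  · filter_upwards [hcont.eventually_lt_const hlt] with q hq
    simp [leftHalfPlane, hq, hpΩ, hlt]
  · exact absurd ⟨hpΩ, heq⟩ hp
  · filter_upwards [hcont.eventually_const_lt hgt] with q hq
    simp [leftHalfPlane, hq.le, hgt.le]

theorem inter_frontier_nonempty_of_isPreconnected {X : Type*} [TopologicalSpace X] {s t : Set X}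
    (hs : IsPreconnected s) (ht : (s ∩ t).Nonempty) (htc : (s ∩ tᶜ).Nonempty) :
    (s ∩ frontier t).Nonempty := by
  by_contra! h
  have hoff : ∀ x ∈ s, x ∉ frontier t := fun x hx hxt => h.subset ⟨hx, hxt⟩
  have hint : ∀ x ∈ s, x ∈ t → x ∈ interior t := fun x hx hxt => by
    by_contra hxi
    exact hoff x hx ⟨subset_closure hxt, hxi⟩
  have hintc : ∀ x ∈ s, x ∈ tᶜ → x ∈ interior tᶜ := fun x hx hxt => by
    by_contra hxi
    exact hoff x hx (frontier_compl t ▸ ⟨subset_closure hxt, hxi⟩)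
  obtain ⟨x, hx⟩ := ht
  obtain ⟨y, hy⟩ := htc
  obtain ⟨z, -, hzt, hztc⟩ := hs _ _ isOpen_interior isOpen_interior
    (fun z hz => (em (z ∈ t)).imp (hint z hz) (hintc z hz))
    ⟨x, hx.1, hint x hx.1 hx.2⟩ ⟨y, hy.1, hintc y hy.1 hy.2⟩
  exact interior_subset hztc (interior_subset hzt)

theorem exists_cartesian_mem_frontier {Ω : Set E2} (hopen : IsOpen Ω)
    (hbdd : Bornology.IsBounded Ω) {a y : ℝ} (ha : cartesian (a, y) ∈ Ω) {s : Set ℝ}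
    (hs : IsPreconnected s) (has : a ∈ s) (hunbdd : ¬ Bornology.IsBounded s) :
    ∃ x ∈ s, x ≠ a ∧ cartesian (x, y) ∈ frontier Ω := by
  have hiso := isometry_cartesian_left y
  obtain ⟨x, hx, hxΩ⟩ : ∃ x ∈ s, cartesian (x, y) ∉ Ω := by
    by_contra! h
    exact hunbdd ((hiso.antilipschitz.isBounded_preimage hbdd).subset h)
  obtain ⟨_, ⟨e, he, rfl⟩, heΩ⟩ := inter_frontier_nonempty_of_isPreconnected
    (hs.image _ hiso.continuous.continuousOn) ⟨_, ⟨a, has, rfl⟩, ha⟩ ⟨_, ⟨x, hx, rfl⟩, hxΩ⟩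
  refine ⟨e, he, ?_, heΩ⟩
  rintro rfl
  exact (hopen.frontier_eq ▸ heΩ).2 ha

theorem cartesian_segment_mem {Ω : Set E2} (hconv : Convex ℝ Ω) (hopen : IsOpen Ω)
    {c e y ρ : ℝ} (hball : ball (cartesian (c, y)) ρ ⊆ Ω) (he : cartesian (e, y) ∈ closure Ω)
    {s t : ℝ} (hs : s ∈ Ioc (0 : ℝ) 1) (ht : |t - y| < s * ρ) :
    cartesian (e + s * (c - e), t) ∈ Ω := by
  have hs0 : s ≠ 0 := hs.1.ne'
  have hmem : cartesian (c, y + (t - y) / s) ∈ interior Ω := by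
    rw [hopen.interior_eq]
    refine hball ?_
    rw [mem_ball, (isometry_cartesian_right c).dist_eq, Real.dist_eq, add_sub_cancel_left, abs_div,
      abs_of_pos hs.1, div_lt_iff₀' hs.1]
    exact ht
  have h := hconv.combo_interior_closure_mem_interior hmem he hs.1 (sub_nonneg.2 hs.2)
    (add_sub_cancel s 1)
  rw [smul_cartesian_add_smul_cartesian, hopen.interior_eq] at h
  convert h using 3 <;> field_simp <;> ring

-- By convexity `Ω` contains, at each end of the horizontal chord through `(c, y)`, a cone over a
-- disc around `(c, y)`; the aperture of the two cones determines `K`.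
theorem exists_forall_cartesian_mem {Ω : Set E2} (hconv : Convex ℝ Ω) (hopen : IsOpen Ω)
    {l c b y : ℝ} (hc : cartesian (c, y) ∈ Ω) (hl : cartesian (l, y) ∈ closure Ω)
    (hb : cartesian (b, y) ∈ closure Ω) (hlc : l < c) (hcb : c < b) :
    ∃ K > 0, ∀ r > 0, ∀ x ∈ Icc (l + K * r) (b - K * r), ∀ t ∈ closedBall y r,
      cartesian (x, t) ∈ Ω := by
  obtain ⟨ρ, hρ, hball⟩ := Metric.isOpen_iff.1 hopen _ hc
  have hlb : 0 < b - l := by linarith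
  refine ⟨2 * (b - l) / ρ, by positivity, fun r hr x hx t ht => ?_⟩
  have hty : |t - y| ≤ r := ht
  have hKr : 2 * (b - l) / ρ * r * ρ = 2 * (b - l) * r := by field_simp
  have hKpos : 0 < 2 * (b - l) / ρ * r := by positivity
  have hscale : ∀ d D : ℝ, 0 < D → D ≤ b - l → 2 * (b - l) / ρ * r ≤ d → |t - y| < d / D * ρ :=
    fun d D hD hDl hd => by
      rw [div_mul_eq_mul_div, lt_div_iff₀ hD]
      nlinarith [abs_nonneg (t - y)]
  rcases le_total x c with hxc | hcx
  · have h := cartesian_segment_mem hconv hopen hball hl (s := (x - l) / (c - l))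
      ⟨div_pos (by linarith [hx.1]) (by linarith), (div_le_one (by linarith)).2 (by linarith)⟩
      (hscale _ _ (by linarith) (by linarith) (by linarith [hx.1]))
    rwa [div_mul_cancel₀ _ (by linarith), add_sub_cancel] at h
  · have h := cartesian_segment_mem hconv hopen hball hb (s := (b - x) / (b - c))
      ⟨div_pos (by linarith [hx.2]) (by linarith), (div_le_one (by linarith)).2 (by linarith)⟩
      (hscale _ _ (by linarith) (by linarith) (by linarith [hx.2]))
    rwa [← neg_sub b c, mul_neg, div_mul_cancel₀ _ (by linarith), ← sub_eq_add_neg,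
      sub_sub_cancel] at h

theorem ae_forall_cartesian_of_ae_hausdorffMeasure {P : E2 → Prop} (h : ∀ᵐ p ∂μH[1], P p) :
    ∀ᵐ y : ℝ, ∀ x : ℝ, P (cartesian (x, y)) := by
  have hlip : LipschitzWith 1 fun p : E2 => p 1 := LipschitzWith.of_dist_le_mul fun p q => by
    simpa [Real.dist_eq, dist_eq_norm] using abs_coord_le_norm (p - q) 1
  have hnull : volume ((fun p : E2 => p 1) '' {p | ¬ P p}) = 0 := by
    have hle := hlip.hausdorffMeasure_image_le zero_le_one {p | ¬ P p}
    rw [ae_iff.1 h, mul_zero, hausdorffMeasure_real] at hle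
    exact le_bot_iff.1 hle
  filter_upwards [measure_eq_zero_iff_ae_notMem.1 hnull] with y hy x
  by_contra hP
  exact hy ⟨cartesian (x, y), hP, rfl⟩

/-! ### Boundary averages against concentrated kernels -/

open Asymptotics Module in
theorem isLittleO_setIntegral_ball_inter_of_tendsto_setAverage {E : Type*}
    [NormedAddCommGroup E] [NormedSpace ℝ E] [FiniteDimensional ℝ E] [MeasurableSpace E]
    [BorelSpace E] {μ : Measure E} [μ.IsAddHaarMeasure] {Ω : Set E} {f : E → ℝ} {p : E}
    (h : Tendsto (fun r : ℝ => ⨍ q in ball p r ∩ Ω, f q ∂μ) (𝓝[>] 0) (𝓝 0)) :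
    (fun r : ℝ => ∫ q in ball p r ∩ Ω, f q ∂μ) =o[𝓝[>] 0] fun r => r ^ finrank ℝ E := by
  have hvol : (fun r : ℝ => μ.real (ball p r ∩ Ω)) =O[𝓝[>] 0] fun r => r ^ finrank ℝ E := by
    refine .of_bound (μ.real (closedBall 0 1)) ?_
    filter_upwards [self_mem_nhdsWithin] with r hr
    have hr : 0 < r := hr
    rw [Real.norm_of_nonneg measureReal_nonneg, Real.norm_of_nonneg (by positivity), mul_comm,
      ← Measure.addHaar_real_closedBall' μ p hr.le]
    exact measureReal_mono (inter_subset_left.trans ball_subset_closedBall)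
      measure_closedBall_lt_top.ne
  refine ((hvol.mul_isLittleO ((isLittleO_one_iff ℝ).2 h)).congr (fun r => ?_) fun r => mul_one _)
  exact measure_smul_setAverage f ((measure_mono inter_subset_left).trans_lt measure_ball_lt_top).ne

theorem abs_setIntegral_mul_sub_le {X : Type*} [MeasurableSpace X] {μ : Measure X} {Ω S : Set X}
    {u g : X → ℝ} {c B : ℝ} (hΩ : MeasurableSet Ω) (hΩfin : μ Ω ≠ ⊤) (hu : IntegrableOn u Ω μ)
    (hg : AEStronglyMeasurable g μ) (hB : ∀ x, |g x| ≤ B) (hsupp : Function.support g ⊆ S ∩ Ω) :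
    |(∫ x in Ω, u x * g x ∂μ) - c * ∫ x, g x ∂μ| ≤ B * ∫ x in S ∩ Ω, |u x - c| ∂μ := by
  have hconst : IntegrableOn (fun _ => c) Ω μ := integrableOn_const hΩfin
  have hug : IntegrableOn (fun x => u x * g x) Ω μ := hu.mul_bdd hg.restrict (ae_of_all _ hB)
  have hcg : IntegrableOn (fun x => c * g x) Ω μ := hconst.mul_bdd hg.restrict (ae_of_all _ hB)
  have hsub : IntegrableOn (fun x => |u x - c|) (S ∩ Ω) μ :=
    ((hu.sub hconst).mono_set inter_subset_right).abs
  have hg0 : ∀ x ∉ S ∩ Ω, g x = 0 := fun x hx => by_contra fun h => hx (hsupp h)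
  have hdiff : (∫ x in Ω, u x * g x ∂μ) - c * ∫ x, g x ∂μ =
      ∫ x in S ∩ Ω, (u x - c) * g x ∂μ := by
    rw [← setIntegral_eq_integral_of_forall_compl_eq_zero fun x hx => hg0 x fun h => hx h.2,
      ← integral_const_mul, ← integral_sub hug hcg,
      ← setIntegral_eq_of_subset_of_forall_sdiff_eq_zero hΩ inter_subset_right
        fun x hx => by simp [hg0 x hx.2]]
    simp_rw [sub_mul]
  rw [hdiff, ← integral_const_mul, ← Real.norm_eq_abs]
  refine norm_integral_le_of_norm_le (hsub.const_mul B) (ae_of_all _ fun x => ?_)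
  rw [norm_mul, mul_comm]
  exact mul_le_mul_of_nonneg_right (hB x) (abs_nonneg _)

theorem eventually_abs_setIntegral_mul_sub_le {Ω : Set E2} (hΩ : MeasurableSet Ω)
    (hΩfin : volume Ω ≠ ⊤) {u : E2 → ℝ} (hu : IntegrableOn u Ω) {p : E2} {c L C ε : ℝ}
    (hL : 0 < L) (hC : 0 < C) (hε : 0 < ε)
    (h : Tendsto (fun r : ℝ => ⨍ q in ball p r ∩ Ω, |u q - c|) (𝓝[>] 0) (𝓝 0)) :
    ∀ᶠ r in 𝓝[>] (0 : ℝ), ∀ g : E2 → ℝ, Continuous g → (∀ q, |g q| ≤ C / r) →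
      Function.support g ⊆ ball p (L * r) ∩ Ω →
      |(∫ q in Ω, u q * g q) - c * ∫ q, g q| ≤ ε * r := by
  have hscale : Tendsto (fun r : ℝ => L * r) (𝓝[>] 0) (𝓝[>] 0) := by
    refine tendsto_nhdsWithin_iff.2 ⟨?_, ?_⟩
    · exact ((by simpa using (continuous_const_mul L).tendsto 0 :
        Tendsto (fun r : ℝ => L * r) (𝓝 0) (𝓝 0))).mono_left nhdsWithin_le_nhds
    · filter_upwards [self_mem_nhdsWithin] with r hr using mul_pos hL hr
  have hsmall := (isLittleO_setIntegral_ball_inter_of_tendsto_setAverage h).def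
    (show 0 < ε / (C * L ^ 2) by positivity)
  filter_upwards [hscale.eventually hsmall, self_mem_nhdsWithin] with r hr hr0 g hg hgC hgs
  have hr0 : 0 < r := hr0
  rw [finrank_euclideanSpace_fin, Real.norm_of_nonneg (sq_nonneg _)] at hr
  calc |(∫ q in Ω, u q * g q) - c * ∫ q, g q|
      ≤ C / r * ∫ q in ball p (L * r) ∩ Ω, |u q - c| :=
        abs_setIntegral_mul_sub_le hΩ hΩfin hu hg.aestronglyMeasurable hgC hgs
    _ ≤ C / r * (ε / (C * L ^ 2) * (L * r) ^ 2) := by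
        gcongr
        exact (le_abs_self _).trans hr
    _ = ε * r := by field_simp

theorem deriv_smoothTransition_of_notMem_Icc {t : ℝ} (ht : t ∉ Icc (0 : ℝ) 1) :
    deriv Real.smoothTransition t = 0 := by
  rw [mem_Icc, not_and_or, not_le, not_le] at ht
  rcases ht with ht | ht
  · have h : Real.smoothTransition =ᶠ[𝓝 t] fun _ => 0 := by
      filter_upwards [Iio_mem_nhds ht] with s hs
      exact Real.smoothTransition.zero_of_nonpos (le_of_lt hs)
    simp [h.deriv_eq]
  · have h : Real.smoothTransition =ᶠ[𝓝 t] fun _ => 1 := by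
      filter_upwards [Ioi_mem_nhds ht] with s hs
      exact Real.smoothTransition.one_of_one_le (le_of_lt hs)
    simp [h.deriv_eq]

theorem continuous_deriv_smoothTransition : Continuous (deriv Real.smoothTransition) :=
  (Real.smoothTransition.contDiff (n := 1)).continuous_deriv le_rfl

theorem hasCompactSupport_deriv_smoothTransition :
    HasCompactSupport (deriv Real.smoothTransition) :=
  .intro isCompact_Icc fun _ => deriv_smoothTransition_of_notMem_Icc

theorem integral_deriv_smoothTransition : ∫ t, deriv Real.smoothTransition t = 1 := by
  rw [integral_of_hasDerivAt_of_tendsto (f := Real.smoothTransition) (m := 0) (n := 1)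
    (fun t => ((Real.smoothTransition.contDiff (n := 1)).differentiable one_ne_zero t).hasDerivAt)
    (continuous_deriv_smoothTransition.integrable_of_hasCompactSupport
      hasCompactSupport_deriv_smoothTransition), sub_zero]
  · refine tendsto_const_nhds.congr' ?_
    filter_upwards [eventually_le_atBot 0] with t ht
    exact (Real.smoothTransition.zero_of_nonpos ht).symm
  · refine tendsto_const_nhds.congr' ?_
    filter_upwards [eventually_ge_atTop 1] with t ht
    exact (Real.smoothTransition.one_of_one_le ht).symm

/-- The smooth cutoff with values in `[0, 1]` that vanishes near `c` and equals `1` far from `c` on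
the side selected by the sign of `d`; the transition takes place between `c + d` and `c + 2 d`. -/
def cutoff (c d x : ℝ) : ℝ := Real.smoothTransition ((x - c) / d - 1)

theorem contDiff_cutoff (c d : ℝ) : ContDiff ℝ 1 (cutoff c d) :=
  Real.smoothTransition.contDiff.comp (by fun_prop)

theorem deriv_cutoff (c d x : ℝ) :
    deriv (cutoff c d) x = deriv Real.smoothTransition ((x - c) / d - 1) / d := by
  have hinner : HasDerivAt (fun x => (x - c) / d - 1) (1 / d) x :=
    (((hasDerivAt_id x).sub_const c).div_const d).sub_const 1
  have houter := ((Real.smoothTransition.contDiff (n := 1)).differentiable one_ne_zero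
    ((x - c) / d - 1)).hasDerivAt
  rw [show cutoff c d = Real.smoothTransition ∘ fun x => (x - c) / d - 1 from rfl,
    (houter.comp x hinner).deriv, mul_one_div]

theorem continuous_deriv_cutoff (c d : ℝ) : Continuous (deriv (cutoff c d)) :=
  (contDiff_cutoff c d).continuous_deriv le_rfl

theorem exists_abs_deriv_cutoff_le :
    ∃ C > 0, ∀ c d x : ℝ, |deriv (cutoff c d) x| ≤ C / |d| := by
  obtain ⟨C, hC⟩ := hasCompactSupport_deriv_smoothTransition.exists_bound_of_continuous
    continuous_deriv_smoothTransition
  refine ⟨max C 1, by positivity, fun c d x => ?_⟩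
  rw [deriv_cutoff, abs_div]
  gcongr
  exact (hC _).trans (le_max_left _ _)

theorem mem_Icc_of_deriv_cutoff_ne_zero {c d x : ℝ} (h : deriv (cutoff c d) x ≠ 0) :
    (x - c) / d ∈ Icc (1 : ℝ) 2 := by
  rw [deriv_cutoff] at h
  have hmem : (x - c) / d - 1 ∈ Icc (0 : ℝ) 1 := by
    by_contra hnot
    exact h (by rw [deriv_smoothTransition_of_notMem_Icc hnot, zero_div])
  exact ⟨by linarith [hmem.1], by linarith [hmem.2]⟩

theorem integral_deriv_cutoff (c d : ℝ) : ∫ x, deriv (cutoff c d) x = |d| / d := by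
  simp_rw [deriv_cutoff]
  rw [integral_div, integral_sub_right_eq_self (fun x => deriv Real.smoothTransition (x / d - 1)) c,
    Measure.integral_comp_div (fun x => deriv Real.smoothTransition (x - 1)) d,
    integral_sub_right_eq_self (deriv Real.smoothTransition), integral_deriv_smoothTransition,
    smul_eq_mul, mul_one]

/-- The cutoff in `x` supported in `[l + δ, b - δ]` whose derivative has mass `1` near `l` and
`-1` near `b`. -/
def plateau (l b δ x : ℝ) : ℝ := cutoff l δ x + cutoff b (-δ) x - 1

theorem contDiff_plateau (l b δ : ℝ) : ContDiff ℝ 1 (plateau l b δ) :=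
  ((contDiff_cutoff l δ).add (contDiff_cutoff b (-δ))).sub contDiff_const

theorem deriv_plateau (l b δ x : ℝ) :
    deriv (plateau l b δ) x = deriv (cutoff l δ) x + deriv (cutoff b (-δ)) x :=
  ((((contDiff_cutoff l δ).differentiable one_ne_zero x).hasDerivAt.add
    ((contDiff_cutoff b (-δ)).differentiable one_ne_zero x).hasDerivAt).sub_const 1).deriv

theorem abs_plateau_le_one (l b δ x : ℝ) : |plateau l b δ x| ≤ 1 := by
  have h : ∀ c d, cutoff c d x ∈ Icc (0 : ℝ) 1 := fun c d =>
    ⟨Real.smoothTransition.nonneg _, Real.smoothTransition.le_one _⟩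
  rw [plateau, abs_le]
  constructor <;> linarith [(h l δ).1, (h l δ).2, (h b (-δ)).1, (h b (-δ)).2]

theorem support_plateau_subset {l b δ : ℝ} (hδ : 0 < δ) (hlb : l + 3 * δ ≤ b) :
    Function.support (plateau l b δ) ⊆ Icc (l + δ) (b - δ) := by
  intro x hx
  by_contra hnot
  refine hx ?_
  have hflip : (x - b) / -δ = (b - x) / δ := by rw [div_neg, ← neg_div, neg_sub]
  simp only [plateau, cutoff, hflip]
  rw [mem_Icc, not_and_or, not_le, not_le] at hnot
  rcases hnot with h | h
  · rw [Real.smoothTransition.zero_of_nonpos, Real.smoothTransition.one_of_one_le, zero_add,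
      sub_self]
    · rw [le_sub_iff_add_le, le_div_iff₀ hδ]; linarith
    · rw [sub_nonpos, div_le_one hδ]; linarith
  · rw [Real.smoothTransition.one_of_one_le, Real.smoothTransition.zero_of_nonpos, add_zero,
      sub_self]
    · rw [sub_nonpos, div_le_one hδ]; linarith
    · rw [le_sub_iff_add_le, le_div_iff₀ hδ]; linarith

theorem fderiv_mul_coord {η ψ : ℝ → ℝ} {p : E2} (hη : DifferentiableAt ℝ η (p 0))
    (hψ : DifferentiableAt ℝ ψ (p 1)) :
    fderiv ℝ (fun q : E2 => η (q 0) * ψ (q 1)) p (EuclideanSpace.single 0 1) =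
      deriv η (p 0) * ψ (p 1) := by
  have hcoord (i : Fin 2) : HasFDerivAt (fun q : E2 => q i) (EuclideanSpace.proj (𝕜 := ℝ) i) p :=
    (EuclideanSpace.proj (𝕜 := ℝ) i : E2 →L[ℝ] ℝ).hasFDerivAt
  have hmul : HasFDerivAt (fun q : E2 => η (q 0) * ψ (q 1)) _ p :=
    (hη.hasDerivAt.comp_hasFDerivAt p (hcoord 0)).mul (hψ.hasDerivAt.comp_hasFDerivAt p (hcoord 1))
  simp [hmul.fderiv, mul_comm]

theorem integral_mul_coord (f g : ℝ → ℝ) :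
    ∫ p : E2, f (p 0) * g (p 1) = (∫ x, f x) * ∫ y, g y := by
  rw [← measurePreserving_cartesian.integral_comp measurableEmbedding_cartesian]
  exact integral_prod_mul f g

theorem support_deriv_cutoff_mul_subset_ball {c d y r : ℝ} {ψ : ℝ → ℝ}
    (hψ : Function.support ψ ⊆ ball y r) :
    Function.support (fun p : E2 => deriv (cutoff c d) (p 0) * ψ (p 1)) ⊆
      ball (cartesian (c, y)) (2 * |d| + r) := by
  intro p hp
  have hx := mem_Icc_of_deriv_cutoff_ne_zero (left_ne_zero_of_mul hp)
  have hd : d ≠ 0 := by rintro rfl; norm_num at hx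
  have hxd : |p 0 - c| ≤ 2 * |d| := by
    rw [← div_le_iff₀ (abs_pos.2 hd), ← abs_div, abs_of_nonneg (zero_le_one.trans hx.1)]
    exact hx.2
  have hy : |p 1 - y| < r := hψ (right_ne_zero_of_mul hp)
  have hdist := dist_cartesian_le (p 0, p 1) (c, y)
  rw [cartesian_coords] at hdist
  exact mem_ball.2 (hdist.trans_lt (add_lt_add_of_le_of_lt hxd hy))

theorem eventually_abs_setIntegral_mul_deriv_cutoff_sub_le {Ω : Set E2} (hΩ : MeasurableSet Ω)
    (hΩfin : volume Ω ≠ ⊤) {u : E2 → ℝ} (hu : IntegrableOn u Ω) {c y α K ε : ℝ} (hK : K ≠ 0)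
    (hε : 0 < ε)
    (h : Tendsto (fun r : ℝ => ⨍ q in ball (cartesian (c, y)) r ∩ Ω, |u q - α|) (𝓝[>] 0) (𝓝 0)) :
    ∀ᶠ r in 𝓝[>] (0 : ℝ), ∀ ψ : ℝ → ℝ, Continuous ψ → (∀ t, |ψ t| ≤ 1) →
      Function.support ψ ⊆ ball y r →
      Function.support (fun p : E2 => deriv (cutoff c (K * r)) (p 0) * ψ (p 1)) ⊆ Ω →
      |(∫ p in Ω, u p * (deriv (cutoff c (K * r)) (p 0) * ψ (p 1))) - α * (|K| / K * ∫ t, ψ t)|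
        ≤ ε * r := by
  obtain ⟨C, hC, hCbound⟩ := exists_abs_deriv_cutoff_le
  filter_upwards [eventually_abs_setIntegral_mul_sub_le hΩ hΩfin hu (L := 2 * |K| + 1)
    (C := C / |K|) (by positivity) (by positivity) hε h, self_mem_nhdsWithin]
    with r hr hr0 ψ hψ hψ1 hψy hsupp
  have hr0 : 0 < r := hr0
  have hKr : |K * r| = |K| * r := by rw [abs_mul, abs_of_pos hr0]
  have hint : ∫ p : E2, deriv (cutoff c (K * r)) (p 0) * ψ (p 1) = |K| / K * ∫ t, ψ t := by
    rw [integral_mul_coord, integral_deriv_cutoff, hKr, mul_div_mul_right _ _ hr0.ne']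
  rw [← hint]
  refine hr _ ?_ (fun p => ?_) fun p hp => ⟨?_, hsupp hp⟩
  · have := continuous_deriv_cutoff c (K * r)
    fun_prop
  · rw [abs_mul, div_div, ← hKr, ← mul_one (C / _)]
    have := hCbound c (K * r) (p 0)
    gcongr
    exact hψ1 _
  · have hball := support_deriv_cutoff_mul_subset_ball hψy hp
    rwa [hKr, ← mul_assoc, ← add_one_mul] at hball

/-! ### Variation in the horizontal direction -/

/-- The admissible scalar test functions on `Ω`, each giving the horizontal field `(φ, 0)` in
`varSet`. -/
structure IsTestFunction (Ω : Set E2) (φ : E2 → ℝ) : Prop where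
  contDiff : ContDiff ℝ 1 φ
  hasCompactSupport : HasCompactSupport φ
  tsupport_subset : tsupport φ ⊆ Ω
  abs_le_one : ∀ p, |φ p| ≤ 1

namespace IsTestFunction

variable {Ω : Set E2} {φ χ : E2 → ℝ}

theorem add (hφ : IsTestFunction Ω φ) (hχ : IsTestFunction Ω χ)
    (hdisj : ∀ p, φ p = 0 ∨ χ p = 0) : IsTestFunction Ω (φ + χ) where
  contDiff := hφ.contDiff.add hχ.contDiff
  hasCompactSupport := hφ.hasCompactSupport.add hχ.hasCompactSupport
  tsupport_subset := (tsupport_add φ χ).trans (union_subset hφ.tsupport_subset hχ.tsupport_subset)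
  abs_le_one p := by
    rcases hdisj p with h | h
    · simpa [h] using hχ.abs_le_one p
    · simpa [h] using hφ.abs_le_one p

theorem differentiable (hφ : IsTestFunction Ω φ) : Differentiable ℝ φ :=
  hφ.contDiff.differentiable one_ne_zero

theorem integrableOn_mul_fderiv (hφ : IsTestFunction Ω φ) {u : E2 → ℝ} (hu : IntegrableOn u Ω)
    (v : E2) : IntegrableOn (fun p => u p * fderiv ℝ φ p v) Ω := by
  have hcont : Continuous fun p => fderiv ℝ φ p v :=
    (hφ.contDiff.continuous_fderiv one_ne_zero).clm_apply continuous_const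
  obtain ⟨B, hB⟩ := (hφ.hasCompactSupport.fderiv_apply ℝ v).exists_bound_of_continuous hcont
  exact hu.mul_bdd hcont.aestronglyMeasurable (ae_of_all _ hB)

end IsTestFunction

theorem isTestFunction_mul_coord {Ω : Set E2} {η ψ : ℝ → ℝ} {s t : Set ℝ} (hη : ContDiff ℝ 1 η)
    (hψ : ContDiff ℝ 1 ψ) (hη1 : ∀ x, |η x| ≤ 1) (hψ1 : ∀ y, |ψ y| ≤ 1)
    (hs : IsCompact s) (ht : IsCompact t) (hηs : Function.support η ⊆ s)
    (hψt : Function.support ψ ⊆ t) (hst : ∀ x ∈ s, ∀ y ∈ t, cartesian (x, y) ∈ Ω) :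
    IsTestFunction Ω fun p => η (p 0) * ψ (p 1) := by
  have hcompact : IsCompact (cartesian '' s ×ˢ t) := (hs.prod ht).image cartesian.continuous
  have hsupp : Function.support (fun p : E2 => η (p 0) * ψ (p 1)) ⊆ cartesian '' s ×ˢ t :=
    fun p hp => ⟨(p 0, p 1),
      ⟨hηs (left_ne_zero_of_mul hp), hψt (right_ne_zero_of_mul hp)⟩, cartesian_coords p⟩
  refine ⟨(hη.comp (by fun_prop)).mul (hψ.comp (by fun_prop)),
    .of_support_subset_isCompact hcompact hsupp,
    (closure_minimal hsupp hcompact.isClosed).trans ?_, fun p => ?_⟩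
  · rintro _ ⟨z, hz, rfl⟩
    exact hst z.1 hz.1 z.2 hz.2
  · rw [abs_mul]
    exact mul_le_one₀ (hη1 _) (abs_nonneg _) (hψ1 _)

/-- The test values for the total variation of `u` on `Ω` given by horizontal vector fields that
vanish outside the strip of points with second coordinate in `I`. -/
def horizontalVarSet (Ω : Set E2) (u : E2 → ℝ) (I : Set ℝ) : Set ℝ :=
  {v | ∃ φ, IsTestFunction Ω φ ∧ (∀ p, φ p ≠ 0 → p 1 ∈ I) ∧
    v = ∫ p in Ω, u p * fderiv ℝ φ p (EuclideanSpace.single 0 1)}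

/-- The mass `|D₁u|` of the horizontal derivative of `u` in the part of `Ω` with second
coordinate in `I`, for open `I`. -/
def horizontalVar (Ω : Set E2) (u : E2 → ℝ) (I : Set ℝ) : ℝ := sSup (horizontalVarSet Ω u I)

theorem divg_single {φ : E2 → ℝ} {p : E2} (hφ : DifferentiableAt ℝ φ p) :
    divg (fun q => φ q • EuclideanSpace.single 0 1) p =
      fderiv ℝ φ p (EuclideanSpace.single 0 1) := by
  simp [divg, (hφ.hasFDerivAt.smul_const (EuclideanSpace.single (0 : Fin 2) (1 : ℝ))).fderiv]

section HorizontalVar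

variable {Ω : Set E2} {u : E2 → ℝ} {I J : Set ℝ}

theorem horizontalVarSet_subset_varSet : horizontalVarSet Ω u I ⊆ varSet Ω u := by
  rintro _ ⟨φ, hφ, -, rfl⟩
  have hsupp : tsupport (fun p => φ p • (EuclideanSpace.single 0 1 : E2)) ⊆ tsupport φ :=
    tsupport_smul_subset_left φ _
  refine ⟨fun p => φ p • EuclideanSpace.single 0 1, hφ.contDiff.smul contDiff_const,
    hφ.hasCompactSupport.smul_right, hsupp.trans hφ.tsupport_subset, fun p => ?_, ?_⟩
  · simpa [norm_smul] using hφ.abs_le_one p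
  · simp_rw [divg_single (hφ.differentiable _)]

theorem horizontalVarSet_mono (h : I ⊆ J) : horizontalVarSet Ω u I ⊆ horizontalVarSet Ω u J :=
  fun _ ⟨φ, hφ, hφI, hv⟩ => ⟨φ, hφ, fun p hp => h (hφI p hp), hv⟩

theorem zero_mem_horizontalVarSet : 0 ∈ horizontalVarSet Ω u I :=
  ⟨0, ⟨contDiff_const, .zero, by simp, by simp⟩, by simp, by simp⟩

open scoped Pointwise in
theorem horizontalVarSet_add_subset (hu : IntegrableOn u Ω) (h : Disjoint I J) :
    horizontalVarSet Ω u I + horizontalVarSet Ω u J ⊆ horizontalVarSet Ω u (I ∪ J) := by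
  rintro _ ⟨_, ⟨φ, hφ, hφI, rfl⟩, _, ⟨χ, hχ, hχJ, rfl⟩, rfl⟩
  have hdisj : ∀ p, φ p = 0 ∨ χ p = 0 := fun p => by
    by_contra! hp
    exact disjoint_left.1 h (hφI p hp.1) (hχJ p hp.2)
  refine ⟨φ + χ, hφ.add hχ hdisj, fun p hp => ?_, ?_⟩
  · rcases hdisj p with h0 | h0
    · exact .inr (hχJ p fun h0' => hp (by simp [h0, h0']))
    · exact .inl (hφI p fun h0' => hp (by simp [h0, h0']))
  · dsimp only
    rw [← integral_add (hφ.integrableOn_mul_fderiv hu _) (hχ.integrableOn_mul_fderiv hu _)]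
    congr with p
    rw [fderiv_add (hφ.differentiable p) (hχ.differentiable p), add_apply, mul_add]

theorem horizontalVar_nonneg (hu : IsBVOn Ω u) : 0 ≤ horizontalVar Ω u I :=
  le_csSup (hu.2.mono horizontalVarSet_subset_varSet) zero_mem_horizontalVarSet

theorem horizontalVar_le_totalVar (hu : IsBVOn Ω u) : horizontalVar Ω u I ≤ totalVar Ω u :=
  csSup_le_csSup hu.2 ⟨0, zero_mem_horizontalVarSet⟩ horizontalVarSet_subset_varSet

theorem horizontalVar_mono (hu : IsBVOn Ω u) (h : I ⊆ J) :
    horizontalVar Ω u I ≤ horizontalVar Ω u J :=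
  csSup_le_csSup (hu.2.mono horizontalVarSet_subset_varSet) ⟨0, zero_mem_horizontalVarSet⟩
    (horizontalVarSet_mono h)

theorem horizontalVar_add_le (hu : IsBVOn Ω u) (h : Disjoint I J) :
    horizontalVar Ω u I + horizontalVar Ω u J ≤ horizontalVar Ω u (I ∪ J) := by
  have hne : ∀ I, (horizontalVarSet Ω u I).Nonempty := fun I => ⟨0, zero_mem_horizontalVarSet⟩
  have hbdd : ∀ I, BddAbove (horizontalVarSet Ω u I) := fun I =>
    hu.2.mono horizontalVarSet_subset_varSet
  rw [horizontalVar, horizontalVar, ← csSup_add (hne I) (hbdd I) (hne J) (hbdd J)]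
  exact csSup_le_csSup (hbdd _) ((hne I).add (hne J)) (horizontalVarSet_add_subset hu.1 h)

end HorizontalVar

theorem integral_add_integral_le_horizontalVar {Ω : Set E2} {u : E2 → ℝ} (hu : IsBVOn Ω u)
    {l b y r δ : ℝ} (hδ : 0 < δ) (hlb : l + 3 * δ ≤ b)
    (hrect : ∀ x ∈ Icc (l + δ) (b - δ), ∀ t ∈ closedBall y r, cartesian (x, t) ∈ Ω) {ψ : ℝ → ℝ}
    (hψ : ContDiff ℝ 1 ψ) (hψ1 : ∀ t, |ψ t| ≤ 1) (hψy : Function.support ψ ⊆ ball y r) :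
    (∫ p in Ω, u p * (deriv (cutoff l δ) (p 0) * ψ (p 1))) +
      ∫ p in Ω, u p * (deriv (cutoff b (-δ)) (p 0) * ψ (p 1)) ≤ horizontalVar Ω u (ball y r) := by
  have hφ : IsTestFunction Ω fun p => plateau l b δ (p 0) * ψ (p 1) :=
    isTestFunction_mul_coord (contDiff_plateau l b δ) hψ (abs_plateau_le_one l b δ) hψ1
      isCompact_Icc (isCompact_closedBall y r) (support_plateau_subset hδ hlb)
      (hψy.trans ball_subset_closedBall) hrect
  have hint : ∀ c d, IntegrableOn (fun p => u p * (deriv (cutoff c d) (p 0) * ψ (p 1))) Ω := by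
    intro c d
    obtain ⟨C, -, hC⟩ := exists_abs_deriv_cutoff_le
    have hcont : Continuous fun p : E2 => deriv (cutoff c d) (p 0) * ψ (p 1) := by
      have := continuous_deriv_cutoff c d
      have := hψ.continuous
      fun_prop
    refine hu.1.mul_bdd hcont.aestronglyMeasurable (c := C / |d|) (ae_of_all _ fun p => ?_)
    rw [Real.norm_eq_abs, abs_mul]
    exact (mul_le_of_le_one_right (abs_nonneg _) (hψ1 _)).trans (hC c d _)
  refine le_csSup (hu.2.mono horizontalVarSet_subset_varSet)
    ⟨_, hφ, fun p hp => hψy (right_ne_zero_of_mul hp), ?_⟩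
  rw [← integral_add (hint _ _) (hint _ _)]
  congr with p
  rw [fderiv_mul_coord ((contDiff_plateau l b δ).differentiable one_ne_zero _)
    (hψ.differentiable one_ne_zero _), deriv_plateau]
  ring

theorem support_deriv_cutoff_mul_subset {Ω : Set E2} {c d y r : ℝ} {ψ : ℝ → ℝ}
    (hψ : Function.support ψ ⊆ ball y r)
    (hrect : ∀ x, (x - c) / d ∈ Icc (1 : ℝ) 2 → ∀ t ∈ closedBall y r, cartesian (x, t) ∈ Ω) :
    Function.support (fun p : E2 => deriv (cutoff c d) (p 0) * ψ (p 1)) ⊆ Ω := fun p hp =>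
  cartesian_coords p ▸ hrect _ (mem_Icc_of_deriv_cutoff_ne_zero (left_ne_zero_of_mul hp)) _
    (ball_subset_closedBall (hψ (right_ne_zero_of_mul hp)))

theorem exists_contDiff_support_subset_ball_mul_le_integral {θ r : ℝ} (hθ : θ ∈ Ioo (0 : ℝ) 1)
    (hr : 0 < r) (y : ℝ) :
    ∃ ψ : ℝ → ℝ, ContDiff ℝ 1 ψ ∧ (∀ t, |ψ t| ≤ 1) ∧ Function.support ψ ⊆ ball y r ∧
      θ * (2 * r) ≤ ∫ t, ψ t := by
  let ψ : ContDiffBump y := ⟨θ * r, r, mul_pos hθ.1 hr, mul_lt_of_lt_one_left hr hθ.2⟩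
  refine ⟨ψ, ψ.contDiff, fun t => ?_, ψ.support_eq.subset, ?_⟩
  · rw [abs_of_nonneg ψ.nonneg]
    exact ψ.le_one
  · have h := ψ.measure_closedBall_le_integral volume
    rw [Real.volume_real_closedBall ψ.rIn_pos.le] at h
    linarith

theorem eventually_mul_le_horizontalVar_ball {Ω : Set E2} (hΩ : MeasurableSet Ω)
    (hΩfin : volume Ω ≠ ⊤) {u : E2 → ℝ} (hu : IsBVOn Ω u) {l b y K α β κ : ℝ} (hlb : l < b)
    (hK : 0 < K)
    (hrect : ∀ r > 0, ∀ x ∈ Icc (l + K * r) (b - K * r), ∀ t ∈ closedBall y r,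
      cartesian (x, t) ∈ Ω)
    (hα : Tendsto (fun r : ℝ => ⨍ q in ball (cartesian (l, y)) r ∩ Ω, |u q - α|) (𝓝[>] 0) (𝓝 0))
    (hβ : Tendsto (fun r : ℝ => ⨍ q in ball (cartesian (b, y)) r ∩ Ω, |u q - β|) (𝓝[>] 0) (𝓝 0))
    (hβα : β ≤ α) (hκ : κ < α - β) :
    ∀ᶠ r in 𝓝[>] (0 : ℝ), κ * (2 * r) ≤ horizontalVar Ω u (ball y r) := by
  obtain ⟨θ, hκθ, hθ⟩ : ∃ θ, κ < θ * (α - β) ∧ θ ∈ Ioo (0 : ℝ) 1 := by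
    have hlim : Tendsto (fun θ : ℝ => θ * (α - β)) (𝓝[<] 1) (𝓝 (1 * (α - β))) :=
      (by fun_prop : Continuous fun θ : ℝ => θ * (α - β)).continuousWithinAt
    exact ((hlim.eventually_const_lt (by rwa [one_mul])).and (Ioo_mem_nhdsLT one_pos)).exists
  have hε : 0 < θ * (α - β) - κ := sub_pos.2 hκθ
  filter_upwards [eventually_abs_setIntegral_mul_deriv_cutoff_sub_le hΩ hΩfin hu.1 hK.ne' hε hα,
    eventually_abs_setIntegral_mul_deriv_cutoff_sub_le hΩ hΩfin hu.1 (neg_ne_zero.2 hK.ne') hε hβ,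
    Ioo_mem_nhdsGT (show 0 < (b - l) / (3 * K) by have := sub_pos.2 hlb; positivity)]
    with r hleft hright hr
  have hr0 : 0 < r := hr.1
  have hδ : 0 < K * r := mul_pos hK hr0
  have hlb' : l + 3 * (K * r) ≤ b := by
    have := (lt_div_iff₀ (by positivity)).1 hr.2
    linarith
  obtain ⟨ψ, hψ, hψ1, hψy, hmass⟩ :=
    exists_contDiff_support_subset_ball_mul_le_integral hθ hr0 y
  have hl := hleft ψ hψ.continuous hψ1 hψy <| support_deriv_cutoff_mul_subset hψy fun x hx => by
    rw [mem_Icc, le_div_iff₀ hδ, div_le_iff₀ hδ] at hx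
    exact hrect r hr0 x ⟨by linarith [hx.1], by linarith [hx.2]⟩
  have hb := hright ψ hψ.continuous hψ1 hψy <| support_deriv_cutoff_mul_subset hψy fun x hx => by
    rw [neg_mul, div_neg, ← neg_div, mem_Icc, le_div_iff₀ hδ, div_le_iff₀ hδ] at hx
    exact hrect r hr0 x ⟨by linarith [hx.2], by linarith [hx.1]⟩
  rw [abs_of_pos hK, div_self hK.ne', one_mul] at hl
  rw [abs_neg, abs_of_pos hK, div_neg, div_self hK.ne', neg_mul] at hb
  have hvar := integral_add_integral_le_horizontalVar hu hδ hlb' (hrect r hr0) hψ hψ1 hψy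
  have hgain := mul_le_mul_of_nonneg_left hmass (sub_nonneg.2 hβα)
  linarith [(abs_le.1 hl).1, (abs_le.1 hb).1]

theorem one_le_deriv_of_eventually_mul_le_symm {F : ℝ → ℝ} {y : ℝ} (hF : DifferentiableAt ℝ F y)
    (h : ∀ κ < 1, ∀ᶠ r in 𝓝[>] (0 : ℝ), κ * (2 * r) ≤ F (y + r) - F (y - r)) :
    1 ≤ deriv F y := by
  have hsymm : HasDerivAt (fun r => F (y + r) - F (y - r)) (2 * deriv F y) 0 := by
    have hadd := HasDerivAt.comp_const_add y 0 ((add_zero y).symm ▸ hF.hasDerivAt)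
    have hsub := HasDerivAt.comp_const_sub y 0 ((sub_zero y).symm ▸ hF.hasDerivAt)
    rw [add_zero] at hadd
    rw [sub_zero] at hsub
    rw [two_mul, ← sub_neg_eq_add]
    exact hadd.sub hsub
  refine le_of_forall_lt fun κ hκ => ?_
  obtain ⟨κ', hκκ', hκ'⟩ := exists_between hκ
  refine hκκ'.trans_le ?_
  have hlim := hsymm.tendsto_slope_zero_right
  have hle : 2 * κ' ≤ 2 * deriv F y := by
    refine ge_of_tendsto hlim ?_
    filter_upwards [h κ' hκ', self_mem_nhdsWithin] with r hr hr0
    have hr0 : 0 < r := hr0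
    simp only [zero_add, add_zero, sub_zero, sub_self, smul_eq_mul]
    rw [inv_mul_eq_div, le_div_iff₀ hr0]
    linarith
  linarith

theorem volume_real_le_sub_of_ae_eventually_mul_le_symm {F : ℝ → ℝ} (hF : Monotone F)
    {S : Set ℝ} (hS : MeasurableSet S) {l b : ℝ} (hlb : l ≤ b) (hSlb : S ⊆ Ioc l b)
    (h : ∀ᵐ y, y ∈ S → ∀ κ < 1, ∀ᶠ r in 𝓝[>] (0 : ℝ), κ * (2 * r) ≤ F (y + r) - F (y - r)) :
    volume.real S ≤ F b - F l := by
  have hint : IntegrableOn (deriv F) (Ioc l b) :=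
    (intervalIntegrable_iff_integrableOn_Ioc_of_le hlb).1 (hF.monotoneOn _).intervalIntegrable_deriv
  have hderiv : ∀ᵐ y, y ∈ S → 1 ≤ deriv F y := by
    filter_upwards [h, hF.ae_differentiableAt] with y hy hdiff hyS
    exact one_le_deriv_of_eventually_mul_le_symm hdiff (hy hyS)
  have hSfin : volume S ≠ ⊤ := ((measure_mono hSlb).trans_lt measure_Ioc_lt_top).ne
  calc volume.real S = ∫ _ in S, (1 : ℝ) := by simp
    _ ≤ ∫ y in S, deriv F y := setIntegral_mono_on_ae (integrableOn_const hSfin)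
        (hint.mono_set hSlb) hS hderiv
    _ ≤ ∫ y in Ioc l b, deriv F y := setIntegral_mono_set hint
        (ae_of_all _ fun _ => hF.deriv_nonneg) hSlb.eventuallyLE
    _ = ∫ y in l..b, deriv F y := (intervalIntegral.integral_of_le hlb).symm
    _ ≤ F b - F l := by
        have h := (hF.monotoneOn (uIcc l b)).intervalIntegral_deriv_mem_uIcc
        rw [uIcc_of_le (sub_nonneg.2 (hF hlb))] at h
        exact h.2

theorem ae_eventually_mul_le_horizontalVar_ball {Ω : Set E2} (hconv : Convex ℝ Ω)
    (hopen : IsOpen Ω) (hbdd : Bornology.IsBounded Ω) {a : ℝ} {u : E2 → ℝ} (hu : IsBVOn Ω u)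
    (htr : HasTraceOn Ω (μH[1].restrict (frontier Ω)) u
      ((frontier Ω ∩ leftHalfPlane a).indicator 1)) :
    ∀ᵐ y, y ∈ verticalSlice Ω a → ∀ κ < 1,
      ∀ᶠ r in 𝓝[>] (0 : ℝ), κ * (2 * r) ≤ horizontalVar Ω u (ball y r) := by
  rw [HasTraceOn, ae_restrict_iff' isClosed_frontier.measurableSet] at htr
  filter_upwards [ae_forall_cartesian_of_ae_hausdorffMeasure htr] with y hy hya κ hκ
  obtain ⟨l, hl, hla, hlΩ⟩ := exists_cartesian_mem_frontier hopen hbdd hya isPreconnected_Iic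
    self_mem_Iic fun h => not_bddBelow_Iic a h.bddBelow
  obtain ⟨b, hb, hba, hbΩ⟩ := exists_cartesian_mem_frontier hopen hbdd hya isPreconnected_Ici
    self_mem_Ici fun h => not_bddAbove_Ici a h.bddAbove
  have hla : l < a := lt_of_le_of_ne hl hla
  have hab : a < b := lt_of_le_of_ne hb hba.symm
  have hleft := hy l hlΩ
  have hright := hy b hbΩ
  rw [indicator_of_mem (show _ ∈ frontier Ω ∩ leftHalfPlane a from ⟨hlΩ, hla⟩),
    Pi.one_apply] at hleft
  rw [indicator_of_notMem fun h => lt_asymm hab h.2] at hright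
  obtain ⟨K, hK, hrect⟩ := exists_forall_cartesian_mem hconv hopen hya
    (frontier_subset_closure hlΩ) (frontier_subset_closure hbΩ) hla hab
  exact eventually_mul_le_horizontalVar_ball hopen.measurableSet hbdd.measure_lt_top.ne hu
    (hla.trans hab) hK hrect hleft hright zero_le_one (by rwa [sub_zero])

theorem horizontalVar_ball_le_sub {Ω : Set E2} {u : E2 → ℝ} (hu : IsBVOn Ω u) (y : ℝ) {r : ℝ}
    (hr : 0 < r) :
    horizontalVar Ω u (ball y r) ≤
      horizontalVar Ω u (Iio (y + r)) - horizontalVar Ω u (Iio (y - r)) := by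
  rw [Real.ball_eq_Ioo, le_sub_iff_add_le']
  have hdisj : Disjoint (Iio (y - r)) (Ioo (y - r) (y + r)) :=
    Set.disjoint_left.2 fun t ht h => lt_asymm ht h.1
  exact (horizontalVar_add_le hu hdisj).trans <| horizontalVar_mono hu <|
    union_subset (Iio_subset_Iio (by linarith)) Ioo_subset_Iio_self

theorem volume_verticalSlice_le_totalVar {Ω : Set E2} (hconv : Convex ℝ Ω) (hopen : IsOpen Ω)
    (hbdd : Bornology.IsBounded Ω) {a : ℝ} {u : E2 → ℝ} (hu : IsBVOn Ω u)
    (htr : HasTraceOn Ω (μH[1].restrict (frontier Ω)) u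
      ((frontier Ω ∩ leftHalfPlane a).indicator 1)) :
    volume.real (verticalSlice Ω a) ≤ totalVar Ω u := by
  obtain ⟨R, hR, hsub⟩ :=
    ((isometry_cartesian_right a).antilipschitz.isBounded_preimage hbdd).subset_ball_lt 0 0
  rw [Real.ball_eq_Ioo, zero_sub, zero_add] at hsub
  have hmono : Monotone fun t => horizontalVar Ω u (Iio t) := fun s t hst =>
    horizontalVar_mono hu (Iio_subset_Iio hst)
  have hrate : ∀ᵐ y, y ∈ verticalSlice Ω a → ∀ κ < 1, ∀ᶠ r in 𝓝[>] (0 : ℝ),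
      κ * (2 * r) ≤ horizontalVar Ω u (Iio (y + r)) - horizontalVar Ω u (Iio (y - r)) := by
    filter_upwards [ae_eventually_mul_le_horizontalVar_ball hconv hopen hbdd hu htr]
      with y hy hya κ hκ
    filter_upwards [hy hya κ hκ, self_mem_nhdsWithin] with r hball hr
    exact hball.trans (horizontalVar_ball_le_sub hu y hr)
  calc volume.real (verticalSlice Ω a)
      ≤ horizontalVar Ω u (Iio R) - horizontalVar Ω u (Iio (-R)) :=
        volume_real_le_sub_of_ae_eventually_mul_le_symm hmono
          (isOpen_verticalSlice hopen a).measurableSet (by linarith)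
          (hsub.trans Ioo_subset_Ioc_self) hrate
    _ ≤ horizontalVar Ω u (Iio R) := sub_le_self _ (horizontalVar_nonneg hu)
    _ ≤ totalVar Ω u := horizontalVar_le_totalVar hu

/-! ### Least gradient -/

theorem isBVOn_indicator_leftHalfPlane {Ω : Set E2} (hbdd : Bornology.IsBounded Ω) (a : ℝ) :
    IsBVOn Ω ((leftHalfPlane a).indicator 1) := by
  have hone : IntegrableOn (1 : E2 → ℝ) Ω := integrableOn_const hbdd.measure_lt_top.ne
  exact ⟨hone.indicator (isOpen_leftHalfPlane a).measurableSet, volume.real (verticalSlice Ω a),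
    fun _ => le_volume_verticalSlice_of_mem_varSet (volume_verticalSlice_ne_top hbdd a)⟩

theorem totalVar_indicator_leftHalfPlane {Ω : Set E2} (hconv : Convex ℝ Ω) (hopen : IsOpen Ω)
    (hbdd : Bornology.IsBounded Ω) {a : ℝ} (hslice : (verticalSlice Ω a).Nonempty) :
    totalVar Ω ((leftHalfPlane a).indicator 1) = volume.real (verticalSlice Ω a) :=
  le_antisymm
    (csSup_le ⟨0, horizontalVarSet_subset_varSet (zero_mem_horizontalVarSet (I := univ))⟩ fun _ =>
      le_volume_verticalSlice_of_mem_varSet (volume_verticalSlice_ne_top hbdd a))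
    (volume_verticalSlice_le_totalVar hconv hopen hbdd (isBVOn_indicator_leftHalfPlane hbdd a)
      (hasTraceOn_indicator_leftHalfPlane hconv hopen hslice))

theorem stmt17_general {Ω : Set E2} (hconv : Convex ℝ Ω) (hopen : IsOpen Ω)
    (hbdd : Bornology.IsBounded Ω) {a : ℝ} (hslice : (verticalSlice Ω a).Nonempty) :
    IsBVOn Ω ((leftHalfPlane a).indicator 1) ∧
    HasTraceOn Ω (μH[1].restrict (frontier Ω)) ((leftHalfPlane a).indicator 1)
      ((frontier Ω ∩ leftHalfPlane a).indicator 1) ∧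
    totalVar Ω ((leftHalfPlane a).indicator 1) = volume.real (verticalSlice Ω a) ∧
    ∀ u : E2 → ℝ, IsBVOn Ω u →
      HasTraceOn Ω (μH[1].restrict (frontier Ω)) u
        ((frontier Ω ∩ leftHalfPlane a).indicator 1) →
      totalVar Ω ((leftHalfPlane a).indicator 1) ≤ totalVar Ω u := by
  have hvar := totalVar_indicator_leftHalfPlane hconv hopen hbdd hslice
  exact ⟨isBVOn_indicator_leftHalfPlane hbdd a,
    hasTraceOn_indicator_leftHalfPlane hconv hopen hslice, hvar, fun u hu htr =>
    hvar.trans_le (volume_verticalSlice_le_totalVar hconv hopen hbdd hu htr)⟩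

theorem verticalSlice_ball_zero {a y R : ℝ} (hy : 0 ≤ y) (hR : 0 < R) (h : a ^ 2 + y ^ 2 = R ^ 2) :
    verticalSlice (ball 0 R) a = Ioo (-y) y := by
  ext t
  calc cartesian (a, t) ∈ ball 0 R ↔ a ^ 2 + t ^ 2 < R ^ 2 := by
        simp [EuclideanSpace.norm_eq, Fin.sum_univ_two, Real.sqrt_lt' hR]
    _ ↔ t ^ 2 < y ^ 2 := by rw [← h, add_lt_add_iff_left]
    _ ↔ t ∈ Ioo (-y) y := by rw [sq_lt_sq, abs_of_nonneg hy, abs_lt, mem_Ioo]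

/-- on the unit disc `𝔻`, let `M` be the arc of `𝕊¹` to the left of the
vertical line `x = x₀` (with `x₀ ≤ 0`, endpoints `(x₀, ±y₀)`, `y₀ > 0`).  Then
`u₀ = 1_{{x < x₀}}` belongs to `BV(𝔻)`, has trace `1_M`, satisfies
`∫_𝔻 |Du₀| = 2y₀ = ℋ¹(𝒞)` and is a function of least gradient for this datum. -/
theorem stmt17 (x₀ y₀ : ℝ) (hx₀ : x₀ ≤ 0) (hy₀ : 0 < y₀)
    (hcirc : x₀ ^ 2 + y₀ ^ 2 = 1)
    (M : Set E2) (hM : M = {p : E2 | p ∈ sphere (0 : E2) 1 ∧ p 0 < x₀})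
    (u₀ : E2 → ℝ) (hu₀ : u₀ = ({p : E2 | p 0 < x₀}).indicator 1) :
    IsBVOn (ball (0 : E2) 1) u₀ ∧
    HasTraceOn (ball (0 : E2) 1) ((μH[1]).restrict (sphere (0 : E2) 1)) u₀
      (M.indicator 1) ∧
    totalVar (ball (0 : E2) 1) u₀ = 2 * y₀ ∧
    ∀ u : E2 → ℝ, IsBVOn (ball (0 : E2) 1) u →
      HasTraceOn (ball (0 : E2) 1) ((μH[1]).restrict (sphere (0 : E2) 1)) u
        (M.indicator 1) →
      totalVar (ball (0 : E2) 1) u₀ ≤ totalVar (ball (0 : E2) 1) u := by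
  subst hM hu₀
  have hslice := verticalSlice_ball_zero hy₀.le one_pos (hcirc.trans (one_pow 2).symm)
  have h := stmt17_general (convex_ball 0 1) isOpen_ball isBounded_ball
    (hslice ▸ nonempty_Ioo.2 (neg_lt_self hy₀))
  rwa [hslice, frontier_ball 0 one_ne_zero, Real.volume_real_Ioo_of_le (neg_le_self hy₀.le),
    sub_neg_eq_add, ← two_mul] at h
end
end
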